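/- Fix a positive odd integer u. Let K be an imaginary triquadratic field such that the exponent E(K) of Cl(K) divides u. Then K = ℚ(√p₁*, √p₂*, √p₃*) for some p₁*, p₂* ∈ P*₋ and p₃* ∈ P* such that E(ℚ(√p₁*)) and E(ℚ(√p₂*)) both divide u, and moreover: if p₃* < 0 then E(ℚ(√p₃*)) divides u, while if p₃* > 0 then E(ℚ(√(p₁*p₃*))) and E(ℚ(√(p₂*p₃*))) both divide 2u. -/

import Mathlib

/-!
Let `K` be a totally complex field with odd class number and Galois group `(C₂)ⁿ`. By a
Herbrand quotient count of units (Hilbert's Theorem 94) `K` has no unramified quadratic extension.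
Hence an element of `K` that is a square modulo four, and whose ideal is a square because its
product with a coprime element is a square, is itself a square. Splitting off one prime at a time,
every nontrivial automorphism is seen to negate the square root in `K` of some prime discriminant,
so `K` is generated by `n` such roots.

Suppose `n ≥ 3` and only one generator `√m` is imaginary. A prime `l ∣ m` becomes the square of a
principal ideal in `ℚ(√m)`, and it splits in a real quadratic subfield not containing `√m`. As the
class number `h` is odd, the `h`-th powers of the two factors are principal, and the product of
their generators can be corrected by a root of unity so that complex conjugation fixes it; dividing
by a power of `l` gives a fixed integer `γ` with `γ ^ 2` associated to `l`. But `l` is unramified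
in the field fixed by complex conjugation, and taking traces one generator at a time shows that
this is impossible.

The class groups of quadratic subfields have exponent dividing `E(K)` up to a power of two. Genus
theory shows that `ℚ(√m)` has odd class number for a negative prime discriminant `m`. For
`ℚ(√(mn))` with `m < 0 < n`, a class of order four would give a rational point on a conic attached
to `m` and `n`, and from such a point Rédei's construction produces an unramified quadratic
extension of `K`.
-/

open NumberField

/-- `Qsqrt m` is the subfield `ℚ(√m)` of `ℂ`, generated by a square root of `m`. -/
noncomputable def Qsqrt (m : ℤ) : IntermediateField ℚ ℂ :=
  IntermediateField.adjoin ℚ {(m : ℂ) ^ ((1 : ℂ) / 2)}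

/-- `m` belongs to `P* = {8, -4, -8} ∪ {p* : p odd prime}` where `p* = (-1)^((p-1)/2) * p`. -/
def Pstar (m : ℤ) : Prop :=
  m = 8 ∨ m = -4 ∨ m = -8 ∨ ∃ p : ℕ, p.Prime ∧ Odd p ∧ m = (-1) ^ ((p - 1) / 2) * (p : ℤ)

/-- An `n`-quadratic field realized as a subfield of `ℂ`. -/
def IsNQuadratic (n : ℕ) (K : IntermediateField ℚ ℂ) : Prop :=
  FiniteDimensional ℚ K ∧ IsGalois ℚ K ∧
    Nonempty ((K ≃ₐ[ℚ] K) ≃* (Fin n → Multiplicative (ZMod 2)))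

/-- A subfield of `ℂ` is imaginary if it is not contained in `ℝ`. -/
def IsImaginary (K : IntermediateField ℚ ℂ) : Prop :=
  ∃ x : K, (x : ℂ).im ≠ 0

/-- The exponent `E(K)` of the class group of a subfield `K` of `ℂ`. -/
noncomputable def Efield (K : IntermediateField ℚ ℂ) : ℕ :=
  Monoid.exponent (ClassGroup (𝓞 K))

section PowersIndex

variable {G H : Type*} [CommGroup G] [CommGroup H] (n : ℕ)

theorem index_range_powMonoidHom_of_mulEquiv (e : G ≃* H) :
    (powMonoidHom n : H →* H).range.index = (powMonoidHom n : G →* G).range.index := by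
  rw [← Subgroup.index_map_equiv _ e]
  congr 1
  ext x
  simp only [MonoidHom.mem_range, powMonoidHom_apply, Subgroup.mem_map, MonoidHom.coe_coe,
    exists_exists_eq_and, map_pow, e.surjective.exists]

theorem index_range_powMonoidHom_prod :
    (powMonoidHom n : G × H →* G × H).range.index =
      (powMonoidHom n : G →* G).range.index * (powMonoidHom n : H →* H).range.index := by
  rw [← Subgroup.index_prod, ← MonoidHom.range_prodMap]
  rfl

theorem index_range_powMonoidHom_pi {ι : Type*} [Fintype ι] :
    (powMonoidHom n : (ι → G) →* (ι → G)).range.index =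
      (powMonoidHom n : G →* G).range.index ^ Fintype.card ι := by
  have h : (powMonoidHom n : (ι → G) →* (ι → G)).range =
      Subgroup.pi Set.univ fun _ => (powMonoidHom n : G →* G).range := by
    ext x
    simp only [Subgroup.mem_pi, Set.mem_univ, forall_true_left, MonoidHom.mem_range,
      powMonoidHom_apply, funext_iff, Pi.pow_apply]
    exact ⟨fun ⟨y, hy⟩ i => ⟨y i, hy i⟩, Classical.skolem.mp⟩
  rw [h, Subgroup.index_pi, Finset.prod_const, Finset.card_univ]

theorem index_range_powMonoidHom_multiplicative_int :
    (powMonoidHom n : Multiplicative ℤ →* Multiplicative ℤ).range.index = n := by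
  have h : (powMonoidHom n : Multiplicative ℤ →* Multiplicative ℤ).range =
      AddSubgroup.toSubgroup (AddSubgroup.zmultiples (n : ℤ)) := by
    ext x
    simp only [MonoidHom.mem_range, powMonoidHom_apply, Multiplicative.exists]
    exact exists_congr fun y => by rw [← ofAdd_nsmul, nsmul_eq_mul, mul_comm]; rfl
  rw [h, AddSubgroup.index_toSubgroup, Int.index_zmultiples, Int.natAbs_natCast]

end PowersIndex

section UnitIndex

variable (K : Type*) [Field K] [NumberField K]

/-- The multiplicative parametrisation of the units of `𝓞 K` by a root of unity and a vector of
exponents with respect to the fundamental system `Units.fundSystem`. -/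
noncomputable def unitsOfExponents :
    Units.torsion K × (Fin (Units.rank K) → Multiplicative ℤ) →* (𝓞 K)ˣ where
  toFun x := (x.1 : (𝓞 K)ˣ) * ∏ i, Units.fundSystem K i ^ (x.2 i).toAdd
  map_one' := by simp
  map_mul' x y := by
    simp only [Prod.fst_mul, Subgroup.coe_mul, Prod.snd_mul, Pi.mul_apply, toAdd_mul, zpow_add,
      Finset.prod_mul_distrib]
    exact mul_mul_mul_comm _ _ _ _

theorem unitsOfExponents_bijective : Function.Bijective (unitsOfExponents K) := by
  refine ⟨fun x y hxy => ?_, fun x => ?_⟩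
  · obtain ⟨z, -, hz⟩ := Units.exist_unique_eq_mul_prod K (unitsOfExponents K x)
    have hx := hz (x.1, fun i => (x.2 i).toAdd) rfl
    have hy := hz (y.1, fun i => (y.2 i).toAdd) hxy
    have h := Prod.mk.inj (hx.trans hy.symm)
    exact Prod.ext h.1 (funext fun i => Multiplicative.toAdd.injective (congrFun h.2 i))
  · obtain ⟨z, hz, -⟩ := Units.exist_unique_eq_mul_prod K x
    exact ⟨(z.1, fun i => Multiplicative.ofAdd (z.2 i)), hz.symm⟩

theorem index_range_powMonoidHom_units (n : ℕ) :
    (powMonoidHom n : (𝓞 K)ˣ →* (𝓞 K)ˣ).range.index =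
      (Units.torsionOrder K).gcd n * n ^ Units.rank K := by
  rw [index_range_powMonoidHom_of_mulEquiv n (.ofBijective _ (unitsOfExponents_bijective K)),
    index_range_powMonoidHom_prod, index_range_powMonoidHom_pi,
    index_range_powMonoidHom_multiplicative_int, IsCyclic.index_powMonoidHom_range,
    Fintype.card_fin]
  rfl

theorem index_range_sq_units :
    (powMonoidHom 2 : (𝓞 K)ˣ →* (𝓞 K)ˣ).range.index = 2 ^ (Units.rank K + 1) := by
  rw [index_range_powMonoidHom_units, Nat.gcd_eq_right (Units.even_torsionOrder K).two_dvd,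
    pow_succ']

end UnitIndex

section HerbrandCount

variable {E F : Type*} [CommGroup E] [CommGroup F] (i : F →* E)

theorem index_range_sq_eq_comap_mul_sup :
    (powMonoidHom 2 : E →* E).range.index =
      ((powMonoidHom 2 : E →* E).range.comap i).index *
        (i.range ⊔ (powMonoidHom 2 : E →* E).range).index := by
  rw [Subgroup.index_comap, ← Subgroup.relIndex_sup_left, sup_comm,
    Subgroup.relIndex_mul_index le_sup_right]

variable {i} {N : E →* F} (hNi : ∀ a, N (i a) = a ^ 2)
  (hilbert90 : ∀ e, N e = 1 → ∃ e', e * e' ^ 2 = i (N e'))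
include hNi hilbert90

theorem index_range_sup_sq_le (hfin : (powMonoidHom 2 : F →* F).range.index ≠ 0) :
    (i.range ⊔ (powMonoidHom 2 : E →* E).range).index ≤
      (powMonoidHom 2 : F →* F).range.index := by
  have hle : (powMonoidHom 2 : F →* F).range.comap N ≤
      i.range ⊔ (powMonoidHom 2 : E →* E).range := by
    rintro e ⟨a, ha⟩
    rw [powMonoidHom_apply] at ha
    obtain ⟨e', he'⟩ := hilbert90 (e * (i a)⁻¹) (by
      rw [map_mul, map_inv, hNi, ha, mul_inv_cancel])
    have he : e = i (N e' * a) * (e'⁻¹) ^ 2 := by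
      rw [map_mul, ← he', inv_pow, eq_mul_inv_iff_mul_eq, mul_right_comm, inv_mul_cancel_right]
    rw [he]
    exact Subgroup.mul_mem_sup ⟨_, rfl⟩ ⟨_, rfl⟩
  refine Nat.le_of_dvd (Nat.pos_of_ne_zero hfin) ((Subgroup.index_dvd_of_le hle).trans ?_)
  rw [Subgroup.index_comap]
  exact Subgroup.relIndex_dvd_index_of_normal _ _

variable (hi : Function.Injective i) (h2tors : ∀ e : E, e ^ 2 = 1 → e ∈ i.range)
  {m : F} (hm : m ≠ 1) (hm2 : m ^ 2 = 1)
include hi h2tors hm hm2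

theorem not_comap_sq_le_sq :
    ¬ (powMonoidHom 2 : E →* E).range.comap i ≤ (powMonoidHom 2 : F →* F).range := by
  intro hle
  obtain ⟨e, he⟩ := hilbert90 (i m) (by rw [hNi, hm2])
  have hmem : i (m⁻¹ * N e) = e ^ 2 := by rw [map_mul, map_inv, ← he, inv_mul_cancel_left]
  obtain ⟨b, hb⟩ := hle ⟨e, hmem.symm⟩
  rw [powMonoidHom_apply] at hb
  obtain ⟨c, hc⟩ := h2tors (e * (i b)⁻¹) (by
    rw [mul_pow, inv_pow, ← map_pow, hb, hmem, mul_inv_cancel])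
  have he' : e = i (c * b) := by rw [map_mul, hc, inv_mul_cancel_right]
  rw [he', hNi, ← map_pow, ← map_mul] at he
  exact hm (mul_eq_right.mp (hi he))

theorem two_mul_index_range_sq_le (hfin : (powMonoidHom 2 : F →* F).range.index ≠ 0) :
    2 * (powMonoidHom 2 : E →* E).range.index ≤ (powMonoidHom 2 : F →* F).range.index ^ 2 := by
  have hle : (powMonoidHom 2 : F →* F).range ≤ (powMonoidHom 2 : E →* E).range.comap i := by
    rintro _ ⟨a, rfl⟩
    exact ⟨i a, by simp⟩
  have hmul := Subgroup.relIndex_mul_index hle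
  have hne_one := mt Subgroup.relIndex_eq_one.mp
    (not_comap_sq_le_sq hNi hilbert90 hi h2tors hm hm2)
  have hne_zero := left_ne_zero_of_mul (hmul.symm ▸ hfin)
  rw [index_range_sq_eq_comap_mul_sup i, ← mul_assoc, sq]
  refine Nat.mul_le_mul ?_ (index_range_sup_sq_le hNi hilbert90 hfin)
  rw [← hmul]
  exact Nat.mul_le_mul_right _ (by lia)

end HerbrandCount

section QuadraticConjugation

variable (R : Type*) {S : Type*} [CommRing R] [CommRing S] [Algebra R S]

/-- `IsQuadraticConj R σ` says that `σ` is an involution of the `R`-algebra `S` whose ring of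
invariants is the image of `R`, as for the conjugation of a quadratic extension of fields and for
the rings of integers in such an extension. -/
structure IsQuadraticConj (σ : S ≃+* S) : Prop where
  involutive : Function.Involutive σ
  apply_eq_self_iff : ∀ x, σ x = x ↔ ∃ r, algebraMap R S r = x

namespace IsQuadraticConj

variable {R} {σ : S ≃+* S} (hσ : IsQuadraticConj R σ)
include hσ

theorem apply_algebraMap (r : R) : σ (algebraMap R S r) = algebraMap R S r :=
  (hσ.apply_eq_self_iff _).mpr ⟨r, rfl⟩

theorem exists_algebraMap_eq_add (x : S) : ∃ r, algebraMap R S r = x + σ x :=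
  (hσ.apply_eq_self_iff _).mp (by rw [map_add, hσ.involutive x, add_comm])

theorem exists_algebraMap_eq_mul (x : S) : ∃ r, algebraMap R S r = x * σ x :=
  (hσ.apply_eq_self_iff _).mp (by rw [map_mul, hσ.involutive x, mul_comm])

theorem sub_mul_mem_map_comap {I : Ideal S} (hI : ∀ x ∈ I, σ x ∈ I) (θ : S) {x : S}
    (hx : x ∈ I) : (θ - σ θ) * x ∈ (I.comap (algebraMap R S)).map (algebraMap R S) := by
  have add_mem {y : S} (hy : y ∈ I) :
      y + σ y ∈ (I.comap (algebraMap R S)).map (algebraMap R S) := by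
    obtain ⟨r, hr⟩ := hσ.exists_algebraMap_eq_add y
    rw [← hr]
    exact Ideal.mem_map_of_mem _ (Ideal.mem_comap.mpr (hr ▸ I.add_mem hy (hI y hy)))
  have key : (θ - σ θ) * x = (θ * x + σ (θ * x)) - σ θ * (x + σ x) := by rw [map_mul]; ring
  rw [key]
  exact Ideal.sub_mem _ (add_mem (I.mul_mem_left θ hx)) (Ideal.mul_mem_left _ _ (add_mem hx))

theorem map_comap_eq_of_span_range_sub_eq_top {I : Ideal S} (hI : ∀ x ∈ I, σ x ∈ I)
    (hunr : Ideal.span (Set.range fun θ : S => θ - σ θ) = ⊤) :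
    (I.comap (algebraMap R S)).map (algebraMap R S) = I := by
  refine le_antisymm Ideal.map_comap_le fun x hx => ?_
  set J := (I.comap (algebraMap R S)).map (algebraMap R S)
  have hle : Ideal.span (Set.range fun θ : S => θ - σ θ) ≤ J.colon {x} := by
    rw [Ideal.span_le]
    rintro _ ⟨θ, rfl⟩
    exact Submodule.mem_colon_singleton.mpr (hσ.sub_mul_mem_map_comap hI θ hx)
  have h1 : (1 : S) ∈ J.colon {x} := hle (hunr ▸ Submodule.mem_top)
  simpa using Submodule.mem_colon_singleton.mp h1

variable [FaithfulSMul R S]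

theorem mul_map_mem_range (e : Sˣ) :
    (MonoidHom.id Sˣ * Units.map (σ : S →* S)) e ∈
      (Units.map (algebraMap R S : R →* S)).range := by
  obtain ⟨r, hr⟩ := hσ.exists_algebraMap_eq_mul e
  obtain ⟨t, ht⟩ := hσ.exists_algebraMap_eq_mul (e⁻¹ : Sˣ)
  have hrt : r * t = 1 := by
    apply FaithfulSMul.algebraMap_injective R S
    rw [map_mul, hr, ht, map_one, mul_mul_mul_comm, ← map_mul, Units.mul_inv, map_one, one_mul]
  exact ⟨⟨r, t, hrt, by rw [mul_comm, hrt]⟩, Units.ext hr⟩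

/-- The relative norm `e ↦ e * σ e` on units. -/
noncomputable def unitsNorm : Sˣ →* Rˣ :=
  (MonoidHom.ofInjective (f := Units.map (algebraMap R S : R →* S))
    (Units.map_injective (FaithfulSMul.algebraMap_injective R S))).symm.toMonoidHom.comp
      ((MonoidHom.id Sˣ * Units.map (σ : S →* S)).codRestrict _ hσ.mul_map_mem_range)

theorem algebraMap_unitsNorm (e : Sˣ) : algebraMap R S (hσ.unitsNorm e) = e * σ e :=
  congrArg (fun e => ((e : Sˣ) : S)) (congrArg Subtype.val
    ((MonoidHom.ofInjective (f := Units.map (algebraMap R S : R →* S))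
      (Units.map_injective (FaithfulSMul.algebraMap_injective R S))).apply_symm_apply
        ⟨_, hσ.mul_map_mem_range e⟩))

omit [FaithfulSMul R S] in
theorem exists_mul_apply_eq_mul_of_mul_apply_eq_sq (hσ1 : σ ≠ RingEquiv.refl S) {b e : S}
    (hb : σ b = b) (he : e * σ e = b ^ 2) : ∃ α, α ≠ 0 ∧ b * σ α = e * α := by
  by_cases h : b + σ e = 0
  · have he1 : e = -b := by
      have h' := congrArg σ h
      rw [map_add, hσ.involutive, hb, map_zero] at h'
      exact (neg_eq_of_add_eq_zero_right h').symm
    obtain ⟨x, hx⟩ : ∃ x, σ x ≠ x := by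
      contrapose! hσ1
      exact RingEquiv.ext hσ1
    refine ⟨x - σ x, sub_ne_zero.mpr hx.symm, ?_⟩
    rw [map_sub, hσ.involutive x, he1]
    ring
  · refine ⟨b + σ e, h, ?_⟩
    rw [map_add, hσ.involutive, hb, mul_add, mul_add, he]
    ring

end IsQuadraticConj

end QuadraticConjugation

section OddClassNumber

theorem isPrincipal_pow_card_classGroup {R : Type*} [CommRing R] [IsDedekindDomain R]
    (I : Ideal R) : (I ^ Nat.card (ClassGroup R)).IsPrincipal := by
  by_cases hI : I = 0
  · rcases eq_or_ne (Nat.card (ClassGroup R)) 0 with h0 | h0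
    · rw [h0, pow_zero, Ideal.one_eq_top]
      exact top_isPrincipal
    · rw [hI, zero_pow h0]
      exact bot_isPrincipal
  · have hI' := mem_nonZeroDivisors_of_ne_zero hI
    have hpow := pow_card_eq_one' (x := ClassGroup.mk0 ⟨I, hI'⟩)
    rw [← map_pow] at hpow
    exact (ClassGroup.mk0_eq_one_iff (pow_mem hI' _)).mp hpow

namespace IsQuadraticConj

variable {R S : Type*} [CommRing R] [IsDedekindDomain R] [CommRing S] [IsDomain S] [Algebra R S]
  [FaithfulSMul R S] {σ : S ≃+* S}

/-- Hilbert's Theorem 90 gives `σ α = e * α` with `α` integral; the ideal `(α)` descends to `R`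
because the extension is unramified, and an odd power of its descent is principal. -/
theorem exists_mul_sq_eq_unitsNorm (hσ : IsQuadraticConj R σ) (hσ1 : σ ≠ RingEquiv.refl S)
    (hunr : Ideal.span (Set.range fun θ : S => θ - σ θ) = ⊤)
    (hodd : Odd (Nat.card (ClassGroup R))) {e : Sˣ} (he : hσ.unitsNorm e = 1) :
    ∃ e' : Sˣ, e * e' ^ 2 = Units.map (algebraMap R S : R →* S) (hσ.unitsNorm e') := by
  have hes : (e : S) * σ e = 1 := by rw [← hσ.algebraMap_unitsNorm, he, Units.val_one, map_one]
  obtain ⟨α, hα0, hα⟩ := hσ.exists_mul_apply_eq_mul_of_mul_apply_eq_sq hσ1 (map_one σ)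
    (hes.trans (one_pow 2).symm)
  rw [one_mul] at hα
  obtain ⟨n, hn⟩ := hodd
  have hdesc := hσ.map_comap_eq_of_span_range_sub_eq_top (I := Ideal.span {α}) (by
    intro x hx
    obtain ⟨y, rfl⟩ := Ideal.mem_span_singleton'.mp hx
    exact Ideal.mem_span_singleton'.mpr ⟨σ y * e, by rw [map_mul, hα, mul_assoc]⟩) hunr
  obtain ⟨a, ha⟩ := (isPrincipal_pow_card_classGroup
    ((Ideal.span {α}).comap (algebraMap R S))).principal
  have hspan : Ideal.span {α ^ (2 * n + 1)} = Ideal.span {algebraMap R S a} := by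
    rw [← Set.image_singleton (a := a), ← Ideal.map_span, ← Ideal.submodule_span_eq (s := {a}),
      ← ha, Ideal.map_pow, hdesc, hn, Ideal.span_singleton_pow]
  obtain ⟨v, hv⟩ := Ideal.span_singleton_eq_span_singleton.mp hspan
  have hev : (e : S) ^ (2 * n + 1) * σ v = v := by
    have h := congrArg σ hv
    rw [map_mul, map_pow, hα, hσ.apply_algebraMap, ← hv, mul_pow] at h
    exact mul_left_cancel₀ (pow_ne_zero (2 * n + 1) hα0) (by linear_combination h)
  refine ⟨e ^ n * v⁻¹, Units.ext ?_⟩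
  rw [Units.coe_map, MonoidHom.coe_coe, hσ.algebraMap_unitsNorm]
  have hvi : (v : S) * (v⁻¹ : Sˣ) = 1 := v.mul_inv
  have hσvi : σ (v : S) * σ (v⁻¹ : Sˣ) = 1 := by rw [← map_mul, hvi, map_one]
  have hen : (e : S) ^ n * σ (e : S) ^ n = 1 := by rw [← mul_pow, hes, one_pow]
  have hev' : (e : S) ^ (2 * n + 1) = v * σ (v⁻¹ : Sˣ) := by
    linear_combination σ (v⁻¹ : Sˣ) * hev - (e : S) ^ (2 * n + 1) * hσvi
  push_cast
  rw [map_mul, map_pow]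
  linear_combination ((v⁻¹ : Sˣ) : S) ^ 2 * hev' + σ (v⁻¹ : Sˣ) * (v⁻¹ : Sˣ) * (hvi - hen)

end IsQuadraticConj

end OddClassNumber

section UnramifiedQuadratic

variable {K L : Type*} [Field K] [Field L] [Algebra K L] {σ : L ≃+* L}

theorem IsQuadraticConj.mapRingEquiv (A : Type*) [CommRing A] [Algebra A K] [Algebra A L]
    [Algebra A (𝓞 L)] [IsScalarTower A K L] [IsScalarTower A (𝓞 L) L] [IsIntegralClosure A ℤ K]
    (hσ : IsQuadraticConj K σ) : IsQuadraticConj A (RingOfIntegers.mapRingEquiv σ) where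
  involutive x := RingOfIntegers.ext (hσ.involutive x)
  apply_eq_self_iff x := by
    have hcoe (a : A) : ((algebraMap A (𝓞 L) a : 𝓞 L) : L) = algebraMap K L (algebraMap A K a) :=
      (IsScalarTower.algebraMap_apply A (𝓞 L) L a).symm.trans
        (IsScalarTower.algebraMap_apply A K L a)
    constructor
    · intro hx
      obtain ⟨y, hy⟩ := (hσ.apply_eq_self_iff x).mp (congrArg ((↑) : 𝓞 L → L) hx)
      have hint : IsIntegral ℤ y := (isIntegral_algebraMap_iff (algebraMap K L).injective).mp
        (hy ▸ RingOfIntegers.isIntegral_coe x)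
      obtain ⟨a, rfl⟩ := (IsIntegralClosure.isIntegral_iff (A := A)).mp hint
      exact ⟨a, RingOfIntegers.ext ((hcoe a).trans hy)⟩
    · rintro ⟨a, rfl⟩
      refine RingOfIntegers.ext ?_
      change σ (algebraMap A (𝓞 L) a : 𝓞 L) = _
      rw [hcoe, hσ.apply_algebraMap]

theorem IsQuadraticConj.mapRingEquiv_ne_refl [NumberField L] (hσ : IsQuadraticConj K σ)
    (hfr : Module.finrank K L = 2) : RingOfIntegers.mapRingEquiv σ ≠ RingEquiv.refl (𝓞 L) := by
  intro h
  have hfix (x : L) : σ x = x := by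
    obtain ⟨a, b, -, rfl⟩ := IsFractionRing.div_surjective (A := 𝓞 L) x
    have hO (y : 𝓞 L) : σ (y : L) = y := congrArg ((↑) : 𝓞 L → L) (DFunLike.congr_fun h y)
    rw [map_div₀, hO, hO]
  have hone : Module.finrank K L = 1 := finrank_eq_one 1 one_ne_zero fun x => by
    obtain ⟨a, ha⟩ := (hσ.apply_eq_self_iff x).mp (hfix x)
    exact ⟨a, by rw [Algebra.smul_def, mul_one, ha]⟩
  lia

theorem two_mul_rank_add_one (K : Type*) [Field K] [NumberField K] [IsTotallyComplex K] :
    2 * (Units.rank K + 1) = Module.finrank ℚ K := by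
  have hcard := InfinitePlace.card_eq_nrRealPlaces_add_nrComplexPlaces K
  have hpos : 0 < Fintype.card (InfinitePlace K) := Fintype.card_pos
  rw [IsTotallyComplex.finrank K, Units.rank]
  rw [IsTotallyComplex.nrRealPlaces_eq_zero] at hcard
  lia

variable [NumberField K] [NumberField L]

theorem rank_add_one_eq_two_mul [IsTotallyComplex K] (hfr : Module.finrank K L = 2) :
    Units.rank L + 1 = (Units.rank K + 1) * 2 := by
  have : IsTotallyComplex L := isTotallyComplex_of_algebra K L
  have hK := two_mul_rank_add_one K
  have hL := two_mul_rank_add_one L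
  have hmul := Module.finrank_mul_finrank ℚ K L
  lia

theorem mem_range_map_algebraMap_of_sq_eq_one {R S : Type*} [CommRing R] [CommRing S] [IsDomain S]
    [Algebra R S] (e : Sˣ) (he : e ^ 2 = 1) : e ∈ (Units.map (algebraMap R S : R →* S)).range := by
  rcases Units.eq_or_eq_neg_of_sq_eq_sq e 1 (he.trans (one_pow 2).symm) with rfl | rfl
  · exact one_mem _
  · exact ⟨-1, Units.ext (by simp)⟩

/-- The quadratic case of Hilbert's Theorem 94: the ideal generated by the differences `θ - σ θ`
is the whole ring exactly when `L / K` is unramified. -/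
theorem IsQuadraticConj.span_range_sub_ne_top [IsTotallyComplex K] (hσ : IsQuadraticConj K σ)
    (hfr : Module.finrank K L = 2) (hodd : Odd (classNumber K)) :
    Ideal.span (Set.range fun θ : 𝓞 L => θ - RingOfIntegers.mapRingEquiv σ θ) ≠ ⊤ := by
  intro hunr
  have hτ := hσ.mapRingEquiv (𝓞 K)
  have hinj := FaithfulSMul.algebraMap_injective (𝓞 K) (𝓞 L)
  rw [classNumber, ← Nat.card_eq_fintype_card] at hodd
  have hnorm (a : (𝓞 K)ˣ) : hτ.unitsNorm (Units.map (algebraMap (𝓞 K) (𝓞 L)) a) = a ^ 2 :=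
    Units.ext (hinj (by
      rw [hτ.algebraMap_unitsNorm, Units.val_pow_eq_pow_val, map_pow, sq, Units.coe_map,
        MonoidHom.coe_coe, hτ.apply_algebraMap]))
  have hcount := two_mul_index_range_sq_le hnorm
    (fun _ => hτ.exists_mul_sq_eq_unitsNorm (hσ.mapRingEquiv_ne_refl hfr) hunr hodd)
    (Units.map_injective hinj) mem_range_map_algebraMap_of_sq_eq_one
    (m := -1)
    (fun h => by simpa [neg_eq_iff_add_eq_zero, one_add_one_eq_two] using congrArg Units.val h)
    (by simp)
    (by rw [index_range_sq_units]; positivity)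
  rw [index_range_sq_units, index_range_sq_units, rank_add_one_eq_two_mul hfr, pow_mul] at hcount
  have : 0 < (2 ^ (Units.rank K + 1)) ^ 2 := by positivity
  lia

end UnramifiedQuadratic

section SquareRootCriterion

theorem isIntegral_of_sq_eq_mul_add {R S : Type*} [CommRing R] [CommRing S] [Algebra R S]
    {x p q : S} (hp : IsIntegral R p) (hq : IsIntegral R q) (h : x ^ 2 = p * x + q) :
    IsIntegral R x := by
  nontriviality S
  have : IsIntegral (integralClosure R S) x := by
    refine ⟨.X ^ 2 - (.C ⟨p, hp⟩ * .X + .C ⟨q, hq⟩), ?_, ?_⟩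
    · exact Polynomial.monic_X_pow_sub
        (Polynomial.degree_linear_le.trans_lt (by norm_num))
    · simp [h]
  exact isIntegral_trans x this

theorem span_range_sub_eq_top_of_isCoprime {R S : Type*} [CommRing R] [CommRing S] [Algebra R S]
    {σ : S ≃+* S} {β β' θ : S} {δ δ' : R} (hβ : β ^ 2 = algebraMap R S δ)
    (hβ' : β' ^ 2 = algebraMap R S δ') (hθ : θ - σ θ = β) (hσβ' : σ β' = -β')
    (hcop : IsCoprime δ (4 * δ')) :
    Ideal.span (Set.range fun θ : S => θ - σ θ) = ⊤ := by
  obtain ⟨a, b, hab⟩ := hcop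
  rw [Ideal.eq_top_iff_one]
  have h1 : 1 = algebraMap R S a * β * (θ - σ θ) + algebraMap R S b * (2 * β') * (β' - σ β') := by
    rw [hθ, hσβ', ← map_one (algebraMap R S), ← hab, map_add, map_mul, map_mul, map_mul, ← hβ,
      ← hβ', map_ofNat]
    ring
  rw [h1]
  exact add_mem (Ideal.mul_mem_left _ _ (Ideal.subset_span ⟨θ, rfl⟩))
    (Ideal.mul_mem_left _ _ (Ideal.subset_span ⟨β', rfl⟩))

variable {K : Type*} [Field K] [NumberField K] [IsTotallyComplex K]

/-- With `β = √δ` and `β' = ρ / β = √δ'`, the elements `(κ + β) / 2` and `β'` show that the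
extension generated by `β` is unramified. -/
theorem IsQuadraticConj.not_isCoprime {L : Type*} [Field L] [NumberField L] [Algebra K L]
    {σ : L ≃+* L} (hσ : IsQuadraticConj K σ) (hfr : Module.finrank K L = 2)
    (hodd : Odd (classNumber K)) {δ δ' ρ κ : 𝓞 K} {β : L} (hβ0 : β ≠ 0)
    (hβ : β ^ 2 = algebraMap K L δ) (hσβ : σ β = -β) (hρ : δ * δ' = ρ ^ 2)
    (hκ : 4 ∣ δ - κ ^ 2) : ¬ IsCoprime δ (4 * δ') := by
  intro hcop
  obtain ⟨w, hw⟩ := hκ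
  have hint (x : 𝓞 K) : IsIntegral ℤ (algebraMap K L x) :=
    (RingOfIntegers.isIntegral_coe x).algebraMap
  have hρL : algebraMap K L δ * algebraMap K L δ' = algebraMap K L ρ ^ 2 := by
    simpa using congrArg (fun z : 𝓞 K => algebraMap K L z) hρ
  have hwL : algebraMap K L δ - algebraMap K L κ ^ 2 = 4 * algebraMap K L w := by
    rw [← map_pow, ← map_sub, ← map_ofNat (algebraMap K L) 4, ← map_mul]
    exact congrArg (fun z : 𝓞 K => algebraMap K L z) hw
  have hβ' : (algebraMap K L ρ / β) ^ 2 = algebraMap K L δ' := by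
    rw [div_pow, ← hρL, ← hβ, mul_div_cancel_left₀ _ (pow_ne_zero 2 hβ0)]
  have iβ : IsIntegral ℤ β := .of_pow two_pos (hβ ▸ hint δ)
  have iβ' : IsIntegral ℤ (algebraMap K L ρ / β) := .of_pow two_pos (hβ' ▸ hint δ')
  have iθ : IsIntegral ℤ ((algebraMap K L κ + β) / 2) :=
    isIntegral_of_sq_eq_mul_add (hint κ) (hint w) (by linear_combination (hβ + hwL) / 4)
  refine hσ.span_range_sub_ne_top hfr hodd (span_range_sub_eq_top_of_isCoprime
    (R := 𝓞 K) (β := ⟨β, iβ⟩) (β' := ⟨_, iβ'⟩) (θ := ⟨_, iθ⟩) (δ := δ) (δ' := δ')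
    (RingOfIntegers.ext hβ) (RingOfIntegers.ext hβ') (RingOfIntegers.ext ?_)
    (RingOfIntegers.ext ?_) hcop)
  · change (algebraMap K L κ + β) / 2 - σ ((algebraMap K L κ + β) / 2) = β
    rw [map_div₀, map_add, hσβ, hσ.apply_algebraMap, map_ofNat]
    ring
  · change σ (algebraMap K L ρ / β) = -(algebraMap K L ρ / β)
    rw [map_div₀, hσβ, hσ.apply_algebraMap, div_neg]

theorem isQuadraticConj_starRingAut {F : Type*} [Field F] [CharZero F] (δ : F) :
    IsQuadraticConj F (starRingAut : QuadraticAlgebra F δ 0 ≃+* QuadraticAlgebra F δ 0) where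
  involutive := star_star
  apply_eq_self_iff x := by
    change star x = x ↔ _
    have him : (star x).im = -x.im := QuadraticAlgebra.im_star x
    constructor
    · intro hx
      rw [hx, self_eq_neg] at him
      exact ⟨x.re, QuadraticAlgebra.ext rfl him.symm⟩
    · rintro ⟨r, rfl⟩
      ext <;> simp

theorem isSquare_of_isCoprime (hodd : Odd (classNumber K)) {δ δ' ρ κ : 𝓞 K}
    (hρ : δ * δ' = ρ ^ 2) (hκ : 4 ∣ δ - κ ^ 2) (hcop : IsCoprime δ (4 * δ')) :
    IsSquare (δ : K) := by
  by_contra hns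
  have : Fact (∀ r : K, r ^ 2 ≠ (δ : K) + 0 * r) :=
    ⟨fun r hr => hns ⟨r, by linear_combination -hr⟩⟩
  have : NumberField (QuadraticAlgebra K (δ : K) 0) := NumberField.of_module_finite K _
  refine (isQuadraticConj_starRingAut (δ : K)).not_isCoprime
    (QuadraticAlgebra.finrank_eq_two _ _) hodd (β := ⟨0, 1⟩) ?_ ?_ ?_ hρ hκ hcop
  · exact fun h => one_ne_zero (congrArg QuadraticAlgebra.im h)
  · rw [sq]
    ext <;> simp
  · change star _ = _
    ext <;> simp

end SquareRootCriterion

section PrimeDiscriminants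

/-- The prime discriminant `p* = (-1) ^ ((p - 1) / 2) * p` of an odd prime `p`. -/
def primeStar (p : ℕ) : ℤ := (-1) ^ ((p - 1) / 2) * p

theorem four_dvd_primeStar_sub_one {p : ℕ} (hp : Odd p) : 4 ∣ primeStar p - 1 := by
  obtain ⟨k, rfl⟩ := hp
  rw [primeStar, show (2 * k + 1 - 1) / 2 = k by lia]
  rcases Nat.even_or_odd' k with ⟨l, rfl | rfl⟩
  · rw [(even_two_mul l).neg_one_pow]
    exact ⟨l, by push_cast; ring⟩
  · rw [(odd_two_mul_add_one l).neg_one_pow]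
    exact ⟨-l - 1, by push_cast; ring⟩

theorem neg_one_pow_mul_self (n : ℕ) : ((-1) ^ n * (-1) ^ n : ℤ) = 1 := by
  rw [← mul_pow, neg_one_mul, neg_neg, one_pow]

theorem isCoprime_primeStar {p : ℕ} (hp : p.Prime) (hodd : Odd p) {e : ℤ} (he : ¬ (p : ℤ) ∣ e) :
    IsCoprime (primeStar p) (4 * e) := by
  have hp' := Nat.prime_iff_prime_int.mp hp
  have hp2 : IsCoprime (p : ℤ) 2 := by
    exact_mod_cast Nat.isCoprime_iff_coprime.mpr hodd.coprime_two_right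
  have hp4e : IsCoprime (p : ℤ) (2 * 2 * e) :=
    (hp2.mul_right hp2).mul_right (hp'.coprime_iff_not_dvd.mpr he)
  exact (isCoprime_mul_unit_left_left (.of_mul_eq_one _ (neg_one_pow_mul_self _)) _ _).mpr hp4e

theorem exists_ringOfIntegers_sqrt {K : Type*} [Field K] {x : K} {d : ℤ} (h : x ^ 2 = d) :
    ∃ X : 𝓞 K, (X : K) = x ∧ X ^ 2 = d :=
  ⟨⟨x, .of_pow two_pos (h ▸ isIntegral_intCast d)⟩, rfl,
    RingOfIntegers.ext (h.trans (map_intCast _ _).symm)⟩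

theorem pstar_primeStar {p : ℕ} (hp : p.Prime) (hodd : Odd p) : Pstar (primeStar p) :=
  .inr (.inr (.inr ⟨p, hp, hodd, rfl⟩))

theorem Pstar.ne_zero {m : ℤ} : Pstar m → m ≠ 0 := by
  rintro (rfl | rfl | rfl | ⟨p, hp, -, rfl⟩)
  · decide
  · decide
  · decide
  · exact mul_ne_zero (pow_ne_zero _ (by decide)) (mod_cast hp.ne_zero)

theorem Pstar.emod_four {m : ℤ} (hm : Pstar m) : m % 4 = 0 ∨ m % 4 = 1 := by
  rcases hm with rfl | rfl | rfl | ⟨p, _, hodd, h⟩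
  · decide
  · decide
  · decide
  · change m = primeStar p at h
    have := four_dvd_primeStar_sub_one hodd
    omega

theorem eq_or_eq_of_forall_odd_prime_not_dvd {d : ℤ} (hd : d ≠ 0)
    (hp : ∀ p : ℕ, p.Prime → Odd p → ¬ (p : ℤ) ∣ d) (h4 : ¬ 4 ∣ d) :
    d = 1 ∨ d = -1 ∨ d = 2 ∨ d = -2 := by
  have hpow := Nat.eq_prime_pow_of_unique_prime_dvd (p := 2) (Int.natAbs_ne_zero.mpr hd)
    fun hq hqd => hq.eq_two_or_odd'.resolve_right fun ho => hp _ hq ho (Int.natCast_dvd.mpr hqd)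
  generalize d.natAbs.primeFactorsList.length = k at hpow
  have hk : k < 2 := by
    by_contra! hk
    exact h4 (Int.natAbs_dvd_natAbs.mp (hpow ▸ pow_dvd_pow 2 hk))
  interval_cases k <;> lia

variable {K : Type*} [Field K] [NumberField K]

theorem isSquare_primeStar_of_isSquare_mul [IsTotallyComplex K] (hodd : Odd (classNumber K)) {p : ℕ}
    (hp : p.Prime) (hp2 : Odd p) {e : ℤ} (he : ¬ (p : ℤ) ∣ e)
    (hpe : IsSquare ((p * e : ℤ) : K)) : IsSquare ((primeStar p : ℤ) : K) := by
  obtain ⟨x, hx⟩ := hpe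
  obtain ⟨X, -, hX⟩ := exists_ringOfIntegers_sqrt ((sq x).trans hx.symm)
  have hε := neg_one_pow_mul_self ((p - 1) / 2)
  have he' : ¬ (p : ℤ) ∣ (-1) ^ ((p - 1) / 2) * e :=
    fun h => he ((Dvd.dvd.mul_left h _).trans (by rw [← mul_assoc, hε, one_mul]))
  obtain ⟨k, hk⟩ := four_dvd_primeStar_sub_one hp2
  have hprod : primeStar p * ((-1) ^ ((p - 1) / 2) * e) = p * e := by
    rw [primeStar]
    linear_combination (p * e : ℤ) * hε
  have hsq := isSquare_of_isCoprime hodd (δ := (primeStar p : 𝓞 K))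
    (δ' := ((-1) ^ ((p - 1) / 2) * e : ℤ)) (ρ := X) (κ := 1)
    (by rw [hX, ← Int.cast_mul, hprod]) ⟨k, by rw [one_pow]; exact_mod_cast hk⟩
    (by exact_mod_cast (isCoprime_primeStar hp hp2 he').map (Int.castRingHom (𝓞 K)))
  exact map_intCast (algebraMap (𝓞 K) K) (primeStar p) ▸ hsq

end PrimeDiscriminants

theorem mul_comm_of_forall_mul_self_eq_one {G : Type*} [Group G] (h2 : ∀ g : G, g * g = 1)
    (g h : G) : g * h = h * g :=
  Commute.of_orderOf_dvd_two (fun x => orderOf_dvd_of_pow_eq_one (by rw [sq, h2])) g h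

section NegatedSquareRoots

variable {K : Type*} [Field K] [NumberField K]

/-- `NegatesSqrt g d` says that `K` contains a square root of the integer `d` which the
automorphism `g` sends to its opposite. -/
def NegatesSqrt (g : Gal(K/ℚ)) (d : ℤ) : Prop := ∃ x : K, x ^ 2 = d ∧ g x = -x

theorem apply_sqrt_eq_or_eq_neg {x : K} {d : ℤ} (hx : x ^ 2 = d) (g : Gal(K/ℚ)) :
    g x = x ∨ g x = -x :=
  sq_eq_sq_iff_eq_or_eq_neg.mp (by rw [← map_pow, hx, map_intCast])

namespace NegatesSqrt

variable {g : Gal(K/ℚ)} {d e m : ℤ}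

theorem four_mul (h : NegatesSqrt g d) : NegatesSqrt g (4 * d) := by
  obtain ⟨x, hx, hgx⟩ := h
  exact ⟨2 * x, by push_cast; linear_combination 4 * hx, by rw [map_mul, hgx, map_ofNat]; ring⟩

theorem of_sq_mul {k : ℤ} (hk : k ≠ 0) (h : NegatesSqrt g (k ^ 2 * e)) : NegatesSqrt g e := by
  obtain ⟨x, hx, hgx⟩ := h
  have hk' : (k : K) ≠ 0 := Int.cast_ne_zero.mpr hk
  refine ⟨x / k, ?_, by rw [map_div₀, hgx, map_intCast, neg_div]⟩
  rw [div_pow, hx, Int.cast_mul, Int.cast_pow, mul_div_cancel_left₀ _ (pow_ne_zero 2 hk')]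

theorem of_mul (hm : m ≠ 0) (hsq : IsSquare (m : K)) (h : NegatesSqrt g (m * e)) :
    NegatesSqrt g m ∨ NegatesSqrt g e := by
  obtain ⟨x, hx, hgx⟩ := h
  obtain ⟨y, hy⟩ := hsq
  rw [← sq] at hy
  have hm' : (m : K) ≠ 0 := Int.cast_ne_zero.mpr hm
  rcases apply_sqrt_eq_or_eq_neg hy.symm g with hgy | hgy
  · refine .inr ⟨x / y, ?_, by rw [map_div₀, hgx, hgy, neg_div]⟩
    rw [div_pow, hx, ← hy, Int.cast_mul, mul_div_cancel_left₀ _ hm']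
  · exact .inl ⟨y, hy.symm, hgy⟩

theorem not_one : ¬ NegatesSqrt g 1 := by
  rintro ⟨x, hx, hgx⟩
  rw [Int.cast_one, sq_eq_one_iff] at hx
  rcases hx with rfl | rfl <;> norm_num [eq_neg_iff_add_eq_zero, neg_eq_iff_add_eq_zero] at hgx

theorem exists_pstar_or_exists_lt [IsTotallyComplex K] (hodd : Odd (classNumber K)) {p : ℕ}
    (hp : p.Prime) (hp2 : Odd p) (hd : d ≠ 0) (hpd : (p : ℤ) ∣ d) (h : NegatesSqrt g d) :
    (∃ m, Pstar m ∧ NegatesSqrt g m) ∨ ∃ e, e ≠ 0 ∧ e.natAbs < d.natAbs ∧ NegatesSqrt g e := by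
  obtain ⟨e, rfl⟩ := hpd
  have he0 : e ≠ 0 := right_ne_zero_of_mul hd
  have hlt : e.natAbs < (p * e).natAbs := by
    rw [Int.natAbs_mul, Int.natAbs_natCast]
    exact lt_mul_of_one_lt_left (Int.natAbs_pos.mpr he0) hp.one_lt
  by_cases he : (p : ℤ) ∣ e
  · obtain ⟨e, rfl⟩ := he
    have he0' : e ≠ 0 := right_ne_zero_of_mul he0
    refine .inr ⟨e, he0', lt_of_le_of_lt ?_ hlt, .of_sq_mul (k := p) (mod_cast hp.ne_zero) ?_⟩
    · exact Int.natAbs_le_of_dvd_ne_zero (Dvd.intro_left _ rfl) he0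
    · rwa [sq, mul_assoc]
  · have hε := neg_one_pow_mul_self ((p - 1) / 2)
    have hpe : IsSquare ((p * e : ℤ) : K) := by
      obtain ⟨x, hx, -⟩ := h
      exact hx ▸ IsSquare.sq x
    have hfactor : (p * e : ℤ) = primeStar p * ((-1) ^ ((p - 1) / 2) * e) := by
      rw [primeStar]
      linear_combination -(p * e : ℤ) * hε
    rw [hfactor] at h
    rcases h.of_mul (pstar_primeStar hp hp2).ne_zero
      (isSquare_primeStar_of_isSquare_mul hodd hp hp2 he hpe) with h | h
    · exact .inl ⟨_, pstar_primeStar hp hp2, h⟩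
    · refine .inr ⟨_, mul_ne_zero (pow_ne_zero _ (by decide)) he0, ?_, h⟩
      rwa [Int.natAbs_mul, Int.natAbs_pow, Int.natAbs_neg, Int.natAbs_one, one_pow, one_mul]

theorem exists_pstar [IsTotallyComplex K] (hodd : Odd (classNumber K)) (hd : d ≠ 0)
    (h : NegatesSqrt g d) : ∃ m, Pstar m ∧ NegatesSqrt g m := by
  induction hn : d.natAbs using Nat.strong_induction_on generalizing d with
  | _ n ih =>
  subst hn
  by_cases hp : ∃ p : ℕ, p.Prime ∧ Odd p ∧ (p : ℤ) ∣ d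
  · obtain ⟨p, hp, hp2, hpd⟩ := hp
    rcases h.exists_pstar_or_exists_lt hodd hp hp2 hd hpd with hm | ⟨e, he, hlt, h'⟩
    · exact hm
    · exact ih _ hlt he h' rfl
  · by_cases h4 : 4 ∣ d
    · obtain ⟨e, rfl⟩ := h4
      have he : e ≠ 0 := right_ne_zero_of_mul hd
      exact ih e.natAbs (by lia) he (.of_sq_mul (k := 2) two_ne_zero h) rfl
    · rcases eq_or_eq_of_forall_odd_prime_not_dvd hd (by simpa using hp) h4
        with rfl | rfl | rfl | rfl
      · exact absurd h not_one
      · exact ⟨-4, .inr (.inl rfl), h.four_mul⟩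
      · exact ⟨8, .inl rfl, h.four_mul⟩
      · exact ⟨-8, .inr (.inr (.inl rfl)), h.four_mul⟩

end NegatesSqrt

theorem exists_eigenvector (h2 : ∀ g : Gal(K/ℚ), g * g = 1) {g : Gal(K/ℚ)} (hg : g ≠ 1)
    (s : Finset Gal(K/ℚ)) : ∃ t ≠ 0, g t = -t ∧ ∀ h ∈ s, h t = t ∨ h t = -t := by
  have hinv (h : Gal(K/ℚ)) (t : K) : h (h t) = t := AlgEquiv.congr_fun (h2 h) t
  have hcomm (h k : Gal(K/ℚ)) (t : K) : h (k t) = k (h t) :=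
    AlgEquiv.congr_fun (mul_comm_of_forall_mul_self_eq_one h2 h k) t
  induction s using Finset.cons_induction with
  | empty =>
    obtain ⟨s, hs⟩ := DFunLike.exists_ne hg
    exact ⟨s - g s, sub_ne_zero.mpr (Ne.symm hs), by rw [map_sub, hinv, neg_sub], by simp⟩
  | cons k s hk ih =>
    obtain ⟨t, ht, hgt, hs⟩ := ih
    simp only [Finset.forall_mem_cons]
    by_cases h0 : t + k t = 0
    · exact ⟨t, ht, hgt, .inr (eq_neg_of_add_eq_zero_right h0), hs⟩
    · refine ⟨t + k t, h0, by rw [map_add, hcomm g, hgt, map_neg, neg_add],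
        .inl (by rw [map_add, hinv, add_comm]), fun h hh => ?_⟩
      rw [map_add, hcomm h]
      rcases hs h hh with e | e <;> simp only [e, map_neg, neg_add, true_or, or_true]

theorem exists_negatesSqrt [IsGalois ℚ K] (h2 : ∀ g : Gal(K/ℚ), g * g = 1) {g : Gal(K/ℚ)}
    (hg : g ≠ 1) : ∃ d, d ≠ 0 ∧ NegatesSqrt g d := by
  obtain ⟨t, ht, hgt, heigen⟩ := exists_eigenvector h2 hg Finset.univ
  have hfix (h : Gal(K/ℚ)) : h (t ^ 2) = t ^ 2 := by
    rw [map_pow]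
    rcases heigen h (Finset.mem_univ h) with e | e <;> rw [e]
    exact neg_sq t
  obtain ⟨q, hq⟩ := (IsGalois.mem_range_algebraMap_iff_fixed (F := ℚ) (t ^ 2)).mpr hfix
  have hq0 : q ≠ 0 := by
    rintro rfl
    exact pow_ne_zero 2 ht (by rw [← hq, map_zero])
  refine ⟨q.num * q.den, mul_ne_zero (Rat.num_ne_zero.mpr hq0) (mod_cast q.den_ne_zero),
    q.den * t, ?_, by rw [map_mul, hgt, map_natCast, mul_neg]⟩
  have hnum : (q.num : K) = q * q.den := by exact_mod_cast (Rat.mul_den_eq_num q).symm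
  rw [mul_pow, ← hq, eq_ratCast, Int.cast_mul, hnum, Int.cast_natCast]
  ring

theorem exists_pstar_negatesSqrt [IsTotallyComplex K] [IsGalois ℚ K]
    (hodd : Odd (classNumber K)) (h2 : ∀ g : Gal(K/ℚ), g * g = 1) {g : Gal(K/ℚ)} (hg : g ≠ 1) :
    ∃ m, Pstar m ∧ NegatesSqrt g m :=
  have ⟨_, hd, h⟩ := exists_negatesSqrt h2 hg
  h.exists_pstar hodd hd

end NegatedSquareRoots

section RedeiDescent

variable {R : Type*} [CommRing R]

theorem isCoprime_add_sub {x y a A : R} (hA : A ^ 2 = a) (h2 : IsCoprime (x + y * A) 2)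
    (hcop : IsCoprime x (a * y ^ 2)) : IsCoprime (x + y * A) (x - y * A) := by
  obtain ⟨c, d, hcd⟩ := h2
  obtain ⟨r, s, hrs⟩ := hcop
  refine ⟨c + d * (r + s * y * A), d * (r - s * y * A), ?_⟩
  linear_combination hcd + 2 * d * hrs + 2 * d * s * y ^ 2 * hA

variable {K : Type*} [Field K] [NumberField K] {a b x y z : ℤ}

theorem isSquare_add_sqrt [IsTotallyComplex K] (hodd : Odd (classNumber K)) {A B κ : 𝓞 K}
    (hA : A ^ 2 = a) (hB : B ^ 2 = b) (h : x ^ 2 = a * y ^ 2 + b * z ^ 2)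
    (hbz : Odd (b * z ^ 2)) (hcop : IsCoprime x (a * y ^ 2)) (hκ : 4 ∣ x + y * A - κ ^ 2) :
    IsSquare (((x + y * A : 𝓞 K)) : K) := by
  have hO : (x : 𝓞 K) ^ 2 = a * y ^ 2 + b * z ^ 2 := by exact_mod_cast congrArg Int.cast h
  have hprod : ((x : 𝓞 K) + y * A) * (x - y * A) = (z * B) ^ 2 := by
    linear_combination hO - (y : 𝓞 K) ^ 2 * hA - (z : 𝓞 K) ^ 2 * hB
  have hnorm : ((x : 𝓞 K) + y * A) * (x - y * A) = (b * z ^ 2 : ℤ) := by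
    rw [hprod, Int.cast_mul, Int.cast_pow]
    linear_combination (z : 𝓞 K) ^ 2 * hB
  have h2 : IsCoprime ((x : 𝓞 K) + y * A) 2 := by
    have := (Int.isCoprime_two_right.mpr hbz).map (Int.castRingHom (𝓞 K))
    rw [eq_intCast, ← hnorm, map_ofNat] at this
    exact this.of_mul_left_left
  have h4 : IsCoprime ((x : 𝓞 K) + y * A) 4 := by
    convert h2.mul_right h2 using 1
    norm_num
  refine isSquare_of_isCoprime hodd hprod hκ (h4.mul_right (isCoprime_add_sub hA h2 ?_))
  exact_mod_cast hcop.map (Int.castRingHom (𝓞 K))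

-- If `γ ^ 2 = x + y * α` then `γ * g γ` is fixed by `g`, whereas `g` negates `± z * β`.
theorem not_isSquare_add_sqrt {g : Gal(K/ℚ)} (hg : g * g = 1) {α β : K} (hα : α ^ 2 = a)
    (hβ : β ^ 2 = b) (hgα : g α = -α) (hgβ : g β = -β) (h : x ^ 2 = a * y ^ 2 + b * z ^ 2)
    (hbz : b * z ^ 2 ≠ 0) : ¬ IsSquare (x + y * α) := by
  rintro ⟨γ, hγ⟩
  rw [← sq] at hγ
  have hK : (x : K) ^ 2 = a * y ^ 2 + b * z ^ 2 := by exact_mod_cast congrArg Int.cast h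
  have hgγ : g γ ^ 2 = x - y * α := by
    rw [← map_pow, ← hγ, map_add, map_mul, hgα, map_intCast, map_intCast, mul_neg, sub_eq_add_neg]
  have hsq : (γ * g γ) ^ 2 = (z * β) ^ 2 := by
    rw [mul_pow, ← hγ, hgγ, mul_pow, hβ]
    linear_combination hK - (y : K) ^ 2 * hα
  have hfix : g (γ * g γ) = γ * g γ := by
    rw [map_mul, show g (g γ) = γ from AlgEquiv.congr_fun hg γ, mul_comm]
  have hneg : g (z * β) = -(z * β) := by rw [map_mul, map_intCast, hgβ, mul_neg]
  have hzβ : (z : K) * β = 0 := by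
    rcases sq_eq_sq_iff_eq_or_eq_neg.mp hsq with e | e
    · rw [e, hneg] at hfix
      exact neg_eq_self.mp hfix
    · rw [e, map_neg, hneg, neg_neg] at hfix
      exact self_eq_neg.mp hfix
  refine hbz (Int.cast_injective (α := K) ?_)
  rw [Int.cast_zero, Int.cast_mul, Int.cast_pow, ← hβ, mul_comm, ← mul_pow, hzβ,
    zero_pow two_ne_zero]

theorem NegatesSqrt.not_negatesSqrt_of_ternary [IsTotallyComplex K] (hodd : Odd (classNumber K))
    {g : Gal(K/ℚ)} (hg : g * g = 1) (ha : NegatesSqrt g a) (h : x ^ 2 = a * y ^ 2 + b * z ^ 2)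
    (hbz : Odd (b * z ^ 2)) (hcop : IsCoprime x (a * y ^ 2))
    (hκ : ∀ A : 𝓞 K, A ^ 2 = a → ∃ κ : 𝓞 K, 4 ∣ x + y * A - κ ^ 2) : ¬ NegatesSqrt g b := by
  rintro ⟨β, hβ, hgβ⟩
  obtain ⟨α, hα, hgα⟩ := ha
  obtain ⟨A, rfl, hA⟩ := exists_ringOfIntegers_sqrt hα
  obtain ⟨B, -, hB⟩ := exists_ringOfIntegers_sqrt hβ
  obtain ⟨κ, hκ⟩ := hκ A hA
  apply not_isSquare_add_sqrt hg hα hβ hgα hgβ h (Int.ne_of_odd_add (by simpa using hbz))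
  simpa only [map_add, map_mul, map_intCast] using isSquare_add_sqrt hodd hA hB h hbz hcop hκ

end RedeiDescent

section SqrtBasis

variable {K : Type*} [Field K] [NumberField K] {ι : Type*}

theorem eq_on_sqrts_of_fixed_eq {x : ι → K} {m : ι → ℤ} (hx : ∀ i, x i ^ 2 = m i)
    {g h : Gal(K/ℚ)} (hgh : {i | g (x i) = x i} = {i | h (x i) = x i}) (i : ι) :
    g (x i) = h (x i) := by
  have hiff : g (x i) = x i ↔ h (x i) = x i := Set.ext_iff.mp hgh i
  by_cases hi : g (x i) = x i
  · rw [hi, hiff.mp hi]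
  · rw [(apply_sqrt_eq_or_eq_neg (hx i) g).resolve_left hi,
      (apply_sqrt_eq_or_eq_neg (hx i) h).resolve_left (mt hiff.mpr hi)]

theorem exists_ne_one_fixing_sqrts [Fintype ι] {x : ι → K} {m : ι → ℤ} (hx : ∀ i, x i ^ 2 = m i)
    (hcard : 2 ^ Fintype.card ι < Nat.card Gal(K/ℚ)) :
    ∃ g : Gal(K/ℚ), g ≠ 1 ∧ ∀ i, g (x i) = x i := by
  rw [← Fintype.card_set, Nat.card_eq_fintype_card] at hcard
  obtain ⟨g, h, hne, hgh⟩ := Fintype.exists_ne_map_eq_of_card_lt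
    (fun g : Gal(K/ℚ) => {i | g (x i) = x i}) hcard
  refine ⟨g⁻¹ * h, mt inv_mul_eq_one.mp hne, fun i => ?_⟩
  rw [AlgEquiv.mul_apply, ← eq_on_sqrts_of_fixed_eq hx hgh]
  exact g.symm_apply_apply (x i)

theorem surjective_fixed_cons {n : ℕ} {x : Fin n → K} {y : K} {d : ℤ} (hy : y ^ 2 = d)
    (hsurj : Function.Surjective fun g : Gal(K/ℚ) => {i | g (x i) = x i}) {g : Gal(K/ℚ)}
    (hg : ∀ i, g (x i) = x i) (hgy : g y = -y) (hy0 : y ≠ 0) :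
    Function.Surjective fun g : Gal(K/ℚ) =>
      {i | g ((Fin.cons y x : Fin (n + 1) → K) i) = (Fin.cons y x : Fin (n + 1) → K) i} := by
  intro s
  obtain ⟨h, hh⟩ := hsurj (Fin.succ ⁻¹' s)
  have hsucc (i : Fin n) : h (x i) = x i ↔ i.succ ∈ s := Set.ext_iff.mp hh i
  by_cases h0 : h y = y ↔ 0 ∈ s
  · exact ⟨h, Set.ext (Fin.cases h0 hsucc)⟩
  · refine ⟨h * g, Set.ext (Fin.cases ?_ fun i => ?_)⟩
    · change h (g y) = y ↔ 0 ∈ s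
      rw [hgy, map_neg]
      rcases apply_sqrt_eq_or_eq_neg hy h with e | e
      · simpa [e, neg_eq_self, hy0] using h0
      · simpa [e, neg_eq_self, hy0] using h0
    · change h (g (x i)) = x i ↔ i.succ ∈ s
      rw [hg, hsucc]

/-- `IsSqrtBasis x m` says that `K / ℚ` is generated by the square roots `x i` of the integers
`m i` and has the largest degree that this permits, namely `2 ^ n` for `n` square roots.
Generation is stated on the side of the Galois group. -/
structure IsSqrtBasis [Fintype ι] (x : ι → K) (m : ι → ℤ) : Prop where
  sq : ∀ i, x i ^ 2 = m i
  card_gal : Nat.card Gal(K/ℚ) = 2 ^ Fintype.card ι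
  eq_one_of_fixes : ∀ g : Gal(K/ℚ), (∀ i, g (x i) = x i) → g = 1

theorem exists_surjective_fixed [IsTotallyComplex K] [IsGalois ℚ K] (hodd : Odd (classNumber K))
    (h2 : ∀ g : Gal(K/ℚ), g * g = 1) (n : ℕ) (hn : 2 ^ n ≤ Nat.card Gal(K/ℚ)) :
    ∃ (x : Fin n → K) (m : Fin n → ℤ), (∀ i, x i ^ 2 = m i) ∧ (∀ i, Pstar (m i)) ∧
      Function.Surjective fun g : Gal(K/ℚ) => {i | g (x i) = x i} := by
  induction n with
  | zero => exact ⟨![], ![], nofun, nofun, Function.surjective_to_subsingleton _⟩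
  | succ n ih =>
    have hlt : 2 ^ n < Nat.card Gal(K/ℚ) := (Nat.pow_lt_pow_succ one_lt_two).trans_le hn
    obtain ⟨x, m, hx, hm, hsurj⟩ := ih hlt.le
    obtain ⟨g, hg, hgx⟩ := exists_ne_one_fixing_sqrts hx (by rwa [Fintype.card_fin])
    obtain ⟨d, hd, y, hy, hgy⟩ := exists_pstar_negatesSqrt hodd h2 hg
    have hy0 : y ≠ 0 := by
      rintro rfl
      exact hd.ne_zero (Int.cast_injective (α := K) (by rw [← hy]; simp))
    exact ⟨Fin.cons y x, Fin.cons d m, Fin.cases hy hx, Fin.cases hd hm,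
      surjective_fixed_cons hy hsurj hgx hgy hy0⟩

theorem exists_isSqrtBasis_pstar [IsTotallyComplex K] [IsGalois ℚ K] (hodd : Odd (classNumber K))
    (h2 : ∀ g : Gal(K/ℚ), g * g = 1) {n : ℕ} (hn : Nat.card Gal(K/ℚ) = 2 ^ n) :
    ∃ (x : Fin n → K) (m : Fin n → ℤ), IsSqrtBasis x m ∧ ∀ i, Pstar (m i) := by
  obtain ⟨x, m, hx, hm, hsurj⟩ := exists_surjective_fixed hodd h2 n hn.ge
  have hinj := (Fintype.bijective_iff_surjective_and_card _).mpr
    ⟨hsurj, by rw [← Nat.card_eq_fintype_card, hn, Fintype.card_set, Fintype.card_fin]⟩ |>.injective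
  refine ⟨x, m, ⟨hx, by rw [hn, Fintype.card_fin], fun g hg => hinj ?_⟩, hm⟩
  simp only [hg, AlgEquiv.one_apply]

namespace IsSqrtBasis

variable [Fintype ι] {x : ι → K} {m : ι → ℤ}

theorem ext (hx : IsSqrtBasis x m) {g h : Gal(K/ℚ)} (hgh : ∀ i, g (x i) = h (x i)) : g = h := by
  refine (inv_mul_eq_one.mp (hx.eq_one_of_fixes _ fun i => ?_)).symm
  rw [AlgEquiv.mul_apply, hgh]
  exact h.symm_apply_apply (x i)

theorem exists_apply_eq_neg (hx : IsSqrtBasis x m) (s : Set ι) :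
    ∃ g : Gal(K/ℚ), (∀ i ∈ s, g (x i) = -x i) ∧ ∀ i ∉ s, g (x i) = x i := by
  have hinj : Function.Injective fun g : Gal(K/ℚ) => {i | g (x i) = x i} :=
    fun g h hgh => hx.ext (eq_on_sqrts_of_fixed_eq hx.sq hgh)
  have hbij := (Fintype.bijective_iff_injective_and_card _).mpr
    ⟨hinj, by rw [← Nat.card_eq_fintype_card, hx.card_gal, Fintype.card_set]⟩
  obtain ⟨g, hg⟩ := hbij.surjective sᶜ
  have hiff (i : ι) : g (x i) = x i ↔ i ∉ s := Set.ext_iff.mp hg i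
  exact ⟨g, fun i hi => (apply_sqrt_eq_or_eq_neg (hx.sq i) g).resolve_left
    fun h => (hiff i).mp h hi, fun i => (hiff i).mpr⟩

theorem negatesSqrt_of_apply_eq_neg (hx : IsSqrtBasis x m) {g : Gal(K/ℚ)} {i : ι}
    (hg : g (x i) = -x i) : NegatesSqrt g (m i) :=
  ⟨x i, hx.sq i, hg⟩

theorem exists_dual (hx : IsSqrtBasis x m) :
    ∃ σ : ι → Gal(K/ℚ), (∀ i, σ i (x i) = -x i) ∧ ∀ i j, j ≠ i → σ i (x j) = x j := by
  choose σ hneg hfix using fun i => hx.exists_apply_eq_neg {i}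
  exact ⟨σ, fun i => hneg i i rfl, fun i j hij => hfix i j hij⟩

theorem closure_range_eq_top (hx : IsSqrtBasis x m) {σ : ι → Gal(K/ℚ)}
    (hneg : ∀ i, σ i (x i) = -x i) (hfix : ∀ i j, j ≠ i → σ i (x j) = x j) :
    Subgroup.closure (Set.range σ) = ⊤ := by
  classical
  have hpattern (s : Finset ι) : ∃ h ∈ Subgroup.closure (Set.range σ),
      (∀ i ∈ s, h (x i) = -x i) ∧ ∀ i ∉ s, h (x i) = x i := by
    induction s using Finset.induction with
    | empty => exact ⟨1, one_mem _, by simp⟩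
    | insert i s hi ih =>
      obtain ⟨h, hmem, hin, hout⟩ := ih
      refine ⟨h * σ i, mul_mem hmem (Subgroup.subset_closure ⟨i, rfl⟩), fun j hj => ?_,
        fun j hj => ?_⟩
      · rcases eq_or_ne j i with rfl | hji
        · rw [AlgEquiv.mul_apply, hneg, map_neg, hout j hi]
        · rw [AlgEquiv.mul_apply, hfix i j hji, hin j (Finset.mem_of_mem_insert_of_ne hj hji)]
      · rw [Finset.mem_insert, not_or] at hj
        rw [AlgEquiv.mul_apply, hfix i j hj.1, hout j hj.2]
  refine (Subgroup.eq_top_iff' _).mpr fun g => ?_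
  obtain ⟨h, hmem, hin, hout⟩ := hpattern {i | g (x i) ≠ x i}
  suffices g = h from this ▸ hmem
  refine hx.ext fun i => ?_
  by_cases hi : g (x i) = x i
  · rw [hout i (by simpa using hi), hi]
  · rw [hin i (by simpa using hi), (apply_sqrt_eq_or_eq_neg (hx.sq i) g).resolve_left hi]

theorem ne_zero (hx : IsSqrtBasis x m) {i : ι} (hi : m i ≠ 0) : x i ≠ 0 := by
  intro h0
  apply hi
  rw [← Int.cast_eq_zero (α := K), ← hx.sq, h0, zero_pow two_ne_zero]

theorem apply_ne_apply (hx : IsSqrtBasis x m) {i j : ι} (hij : i ≠ j) (hj : m j ≠ 0) :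
    m i ≠ m j := by
  intro hm
  obtain ⟨g, hneg, hfix⟩ := hx.exists_apply_eq_neg {i}
  have hgj : g (x j) = -x j := by
    rcases sq_eq_sq_iff_eq_or_eq_neg.mp ((hx.sq j).trans (hm ▸ (hx.sq i).symm)) with h | h
    · rw [h, hneg i rfl]
    · rw [h, map_neg, hneg i rfl]
  exact hx.ne_zero hj (self_eq_neg.mp ((hfix j hij.symm).symm.trans hgj))

theorem exists_update [DecidableEq ι] (hx : IsSqrtBasis x m) {i j : ι} (hij : i ≠ j)
    (hi : m i ≠ 0) {k d : ℤ} (hk : k ≠ 0) (hd : m i * m j = k ^ 2 * d) :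
    ∃ y : ι → K, IsSqrtBasis y (Function.update m j d) := by
  have hk' : (k : K) ≠ 0 := Int.cast_ne_zero.mpr hk
  have hd' : (m i : K) * m j = k ^ 2 * d := mod_cast hd
  refine ⟨Function.update x j (x i * x j / k), fun l => ?_, hx.card_gal, fun g hg => ?_⟩
  · rcases eq_or_ne l j with rfl | hl
    · rw [Function.update_self, Function.update_self, div_pow, mul_pow, hx.sq, hx.sq, hd',
        mul_div_cancel_left₀ _ (pow_ne_zero 2 hk')]
    · rw [Function.update_of_ne hl, Function.update_of_ne hl, hx.sq]
  · have hne (l : ι) (hl : l ≠ j) : g (x l) = x l := by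
      simpa only [Function.update_of_ne hl] using hg l
    refine hx.eq_one_of_fixes g fun l => ?_
    rcases eq_or_ne l j with rfl | hl
    · have hprod := hg l
      rw [Function.update_self, map_div₀, map_mul, map_intCast, hne i hij,
        div_left_inj' hk'] at hprod
      exact mul_left_cancel₀ (hx.ne_zero hi) hprod
    · exact hne l hl

theorem exists_pstar_update [DecidableEq ι] (hx : IsSqrtBasis x m) {i j : ι}
    (hi : m i = -4 ∨ m i = -8) (hj : m j = 8) :
    ∃ (y : ι → K) (d : ℤ), Pstar d ∧ d ≠ 8 ∧ IsSqrtBasis y (Function.update m j d) := by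
  have hij : i ≠ j := by
    rintro rfl
    lia
  rcases hi with hi | hi
  · obtain ⟨y, hy⟩ := hx.exists_update hij (k := 2) (d := -8) (by lia) two_ne_zero
      (by rw [hi, hj]; norm_num)
    exact ⟨y, -8, by simp [Pstar], by norm_num, hy⟩
  · obtain ⟨y, hy⟩ := hx.exists_update hij (k := 4) (d := -4) (by lia) four_ne_zero
      (by rw [hi, hj]; norm_num)
    exact ⟨y, -4, by simp [Pstar], by norm_num, hy⟩

-- The square roots of `-4`, `8` and `-8` are dependent, so `8` can be traded away.
theorem exists_pstar_forall_ne_eight (hx : IsSqrtBasis x m) (hm : ∀ i, Pstar (m i)) :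
    ∃ (y : ι → K) (d : ι → ℤ), IsSqrtBasis y d ∧ (∀ i, Pstar (d i)) ∧
      ∀ i j, d i = -4 ∨ d i = -8 → d j ≠ 8 := by
  classical
  by_cases h : ∃ i j, (m i = -4 ∨ m i = -8) ∧ m j = 8
  · obtain ⟨i, j, hi, hj⟩ := h
    obtain ⟨y, d, hd, hd8, hy⟩ := hx.exists_pstar_update hi hj
    refine ⟨y, _, hy, fun l => ?_, fun _ l _ => ?_⟩
    · rcases eq_or_ne l j with rfl | hl
      · rwa [Function.update_self]
      · rw [Function.update_of_ne hl]
        exact hm l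
    · rcases eq_or_ne l j with rfl | hl
      · rwa [Function.update_self]
      · rw [Function.update_of_ne hl, ← hj]
        exact hx.apply_ne_apply hl (hm j).ne_zero
  · exact ⟨x, m, hx, hm, fun i j hi hj => h ⟨i, j, hi, hj⟩⟩

end IsSqrtBasis

end SqrtBasis

section TraceDescent

theorem prod_sub_smul_mul_mem {G R ι : Type*} [Group G] [CommRing R] [MulSemiringAction G R]
    (h2 : ∀ g : G, g * g = 1) {σ : ι → G} {t : ι → R} (ht : ∀ i j, j ≠ i → σ i • t j = t j)
    {N J : Ideal R} (hN : ∀ g : G, ∀ y ∈ N, g • y ∈ N)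
    (hJ : ∀ y ∈ N, (∀ i, σ i • y = y) → y ∈ J) (s : Finset ι) :
    ∀ y ∈ N, (∀ i ∉ s, σ i • y = y) → (∏ i ∈ s, (t i - σ i • t i)) * y ∈ J := by
  classical
  induction s using Finset.induction with
  | empty =>
    intro y hy hfix
    rw [Finset.prod_empty, one_mul]
    exact hJ y hy fun i => hfix i (Finset.notMem_empty i)
  | insert i s hi ih =>
    intro y hy hfix
    have htrace (z : R) (hz : z ∈ N) (hzfix : ∀ j ∉ insert i s, σ j • z = z) :
        (∏ i ∈ s, (t i - σ i • t i)) * (z + σ i • z) ∈ J := by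
      refine ih _ (add_mem hz (hN _ z hz)) fun j hj => ?_
      rcases eq_or_ne j i with rfl | hji
      · rw [smul_add, smul_smul, h2, one_smul, add_comm]
      · rw [smul_add, smul_smul, mul_comm_of_forall_mul_self_eq_one h2, mul_smul,
          hzfix j (by simp [hji, hj])]
    have hty : ∀ j ∉ insert i s, σ j • (t i * y) = t i * y := fun j hj => by
      rw [smul_mul', hfix j hj, ht j i fun h => hj (h ▸ Finset.mem_insert_self i s)]
    have hcomb := sub_mem (htrace _ (N.mul_mem_left (t i) hy) hty)
      (J.mul_mem_left (σ i • t i) (htrace y hy hfix))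
    rw [Finset.prod_insert hi]
    convert hcomb using 1
    rw [smul_mul']
    ring

variable {K : Type*} [Field K] [NumberField K]

theorem exists_isPrime_intCast_mem_iff {l : ℕ} (hl : l.Prime) :
    ∃ Q : Ideal (𝓞 K), Q.IsPrime ∧ ∀ n : ℤ, (n : 𝓞 K) ∈ Q ↔ (l : ℤ) ∣ n := by
  have : (Ideal.span {(l : ℤ)}).IsPrime :=
    (Ideal.span_singleton_prime (mod_cast hl.ne_zero)).mpr (Nat.prime_iff_prime_int.mp hl)
  obtain ⟨⟨Q, hQ, hover⟩⟩ := Ideal.nonempty_primesOver (Ideal.span {(l : ℤ)}) (S := 𝓞 K)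
  refine ⟨Q, hQ, fun n => ?_⟩
  rw [← Ideal.mem_span_singleton, hover.over, Ideal.mem_comap, eq_intCast]

theorem natCast_dvd_intCast_iff {l : ℕ} (hl : l.Prime) {n : ℤ} :
    (l : 𝓞 K) ∣ n ↔ (l : ℤ) ∣ n := by
  refine ⟨fun h => ?_, fun ⟨k, hk⟩ => ⟨k, by rw [hk]; push_cast; rfl⟩⟩
  obtain ⟨Q, _, hQl⟩ := exists_isPrime_intCast_mem_iff (K := K) hl
  exact (hQl n).mp (Q.mem_of_dvd h (mod_cast (hQl l).mpr dvd_rfl))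

theorem exists_intCast_eq_of_forall_smul_eq [IsGalois ℚ K] {t : 𝓞 K}
    (h : ∀ g : Gal(K/ℚ), g • t = t) : ∃ n : ℤ, (n : 𝓞 K) = t := by
  have := IsGaloisGroup.of_isFractionRing Gal(K/ℚ) ℤ (𝓞 K) ℚ K
  exact Algebra.IsInvariant.isInvariant t h

theorem coe_smul_ringOfIntegers (g : Gal(K/ℚ)) (t : 𝓞 K) : ((g • t : 𝓞 K) : K) = g t :=
  rfl

theorem smul_ringOfIntegers_natCast (g : Gal(K/ℚ)) (n : ℕ) : g • (n : 𝓞 K) = n :=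
  map_natCast (MulSemiringAction.toRingHom Gal(K/ℚ) (𝓞 K) g) n

theorem smul_mem_radical_span_natCast (l : ℕ) (g : Gal(K/ℚ)) {y : 𝓞 K}
    (hy : y ∈ (Ideal.span {(l : 𝓞 K)}).radical) : g • y ∈ (Ideal.span {(l : 𝓞 K)}).radical := by
  obtain ⟨k, hk⟩ := hy
  obtain ⟨z, hz⟩ := Ideal.mem_span_singleton.mp hk
  refine ⟨k, Ideal.mem_span_singleton.mpr ⟨g • z, ?_⟩⟩
  rw [← smul_pow', hz, smul_mul', smul_ringOfIntegers_natCast]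

theorem mem_span_natCast_of_mem_radical [IsGalois ℚ K] {l : ℕ} (hl : l.Prime) {y : 𝓞 K}
    (hy : y ∈ (Ideal.span {(l : 𝓞 K)}).radical) (hfix : ∀ g : Gal(K/ℚ), g • y = y) :
    y ∈ Ideal.span {(l : 𝓞 K)} := by
  obtain ⟨Q, hQ, hQl⟩ := exists_isPrime_intCast_mem_iff (K := K) hl
  have hle : Ideal.span {(l : 𝓞 K)} ≤ Q :=
    (Ideal.span_singleton_le_iff_mem _).mpr (mod_cast (hQl l).mpr dvd_rfl)
  obtain ⟨n, rfl⟩ := exists_intCast_eq_of_forall_smul_eq hfix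
  obtain ⟨k, rfl⟩ := (hQl n).mp (hQ.radical_le_iff.mpr hle hy)
  exact Ideal.mem_span_singleton.mpr ((natCast_dvd_intCast_iff hl).mpr (dvd_mul_right _ k))

theorem isIntegral_half {x : K} {d k : ℤ} (hx : x ^ 2 = d) (hd : d = 4 * k) :
    IsIntegral ℤ (x / 2) := by
  refine isIntegral_of_sq_eq_mul_add isIntegral_zero (isIntegral_intCast k) ?_
  rw [hd] at hx
  push_cast at hx
  linear_combination hx / 4

theorem isIntegral_one_add_half {x : K} {d k : ℤ} (hx : x ^ 2 = d) (hd : d = 4 * k + 1) :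
    IsIntegral ℤ ((1 + x) / 2) := by
  refine isIntegral_of_sq_eq_mul_add isIntegral_one (isIntegral_intCast k) ?_
  rw [hd] at hx
  push_cast at hx
  linear_combination hx / 4

theorem exists_isIntegral_half {x : K} {d : ℤ} (hd : d % 4 = 0 ∨ d % 4 = 1) (hx : x ^ 2 = d) :
    ∃ r : ℤ, IsIntegral ℤ ((r + x) / 2) := by
  rcases hd with hd | hd
  · exact ⟨0, by simpa using isIntegral_half (k := d / 4) hx (by lia)⟩
  · exact ⟨1, by simpa using isIntegral_one_add_half (k := d / 4) hx (by lia)⟩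

theorem exists_sub_smul_sq_eq {x : K} {d : ℤ} (hd : d % 4 = 0 ∨ d % 4 = 1) (hx : x ^ 2 = d) :
    ∃ t : 𝓞 K, ∀ g : Gal(K/ℚ), (g x = x → g • t = t) ∧ (g x = -x → (t - g • t) ^ 2 = d) := by
  obtain ⟨r, hr⟩ := exists_isIntegral_half hd hx
  have hg (g : Gal(K/ℚ)) : g ((r + x) / 2) = (r + g x) / 2 := by
    rw [map_div₀, map_add, map_intCast, map_ofNat]
  refine ⟨⟨_, hr⟩, fun g => ⟨fun h => RingOfIntegers.ext ?_, fun h => RingOfIntegers.ext ?_⟩⟩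
  · exact (hg g).trans (by rw [h]; rfl)
  · change ((r + x) / 2 - g ((r + x) / 2)) ^ 2 = algebraMap (𝓞 K) K d
    rw [hg, h, map_intCast, ← hx]
    ring

variable {ι : Type*} [Fintype ι] {x : ι → K} {m : ι → ℤ}

theorem IsSqrtBasis.smul_eq_of_forall_dual (hx : IsSqrtBasis x m) {σ : ι → Gal(K/ℚ)}
    (hneg : ∀ i, σ i (x i) = -x i) (hfix : ∀ i j, j ≠ i → σ i (x j) = x j) {y : 𝓞 K}
    (hy : ∀ i, σ i • y = y) (g : Gal(K/ℚ)) : g • y = y := by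
  have hle := (Subgroup.closure_le (MulAction.stabilizer Gal(K/ℚ) y)).mpr
    (Set.range_subset_iff.mpr hy)
  rw [hx.closure_range_eq_top hneg hfix] at hle
  exact hle (Subgroup.mem_top g)

theorem IsSqrtBasis.smul_ne_of_associated_sq [IsGalois ℚ K] (hx : IsSqrtBasis x m)
    (hm : ∀ i, Pstar (m i)) (h2 : ∀ g : Gal(K/ℚ), g * g = 1) {c : Gal(K/ℚ)} {i₀ : ι}
    (hc : c (x i₀) = -x i₀) (hc' : ∀ i, i ≠ i₀ → c (x i) = x i) {l : ℕ} (hl : l.Prime)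
    (hlm : ∀ i, i ≠ i₀ → ¬ (l : ℤ) ∣ m i) {γ : 𝓞 K} (hγ : Associated (γ ^ 2) l) : c • γ ≠ γ := by
  classical
  intro hcγ
  obtain ⟨σ, hneg, hfix⟩ := hx.exists_dual
  have hσc : σ i₀ = c := hx.ext fun i => by
    rcases eq_or_ne i i₀ with rfl | hi
    · rw [hneg, hc]
    · rw [hfix _ _ hi, hc' i hi]
  choose t ht using fun i => exists_sub_smul_sq_eq (hm i).emod_four (hx.sq i)
  have hprod : (∏ i ∈ Finset.univ.erase i₀, (t i - σ i • t i)) * γ ∈ Ideal.span {(l : 𝓞 K)} :=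
    prod_sub_smul_mul_mem h2 (fun i j hij => (ht j (σ i)).1 (hfix i j hij))
      (fun g _ => smul_mem_radical_span_natCast l g)
      (fun y hy hσy => mem_span_natCast_of_mem_radical hl hy
        (hx.smul_eq_of_forall_dual hneg hfix hσy)) _ γ
      ⟨2, Ideal.mem_span_singleton.mpr hγ.symm.dvd⟩ (by simpa [hσc] using hcγ)
  obtain ⟨z, hz⟩ := Ideal.mem_span_singleton.mp hprod
  obtain ⟨u, hu⟩ := hγ
  have hl0 : (l : 𝓞 K) ≠ 0 := mod_cast hl.ne_zero
  have hdvd : (l : 𝓞 K) ∣ ((∏ i ∈ Finset.univ.erase i₀, m i : ℤ) : 𝓞 K) := by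
    refine ⟨z ^ 2 * u, mul_left_cancel₀ hl0 ?_⟩
    rw [Int.cast_prod, ← Finset.prod_congr rfl fun i _ => (ht i (σ i)).2 (hneg i),
      Finset.prod_pow]
    nth_rw 1 [← hu]
    linear_combination (u : 𝓞 K) * congrArg (· ^ 2) hz
  obtain ⟨i, hi, hli⟩ := (Nat.prime_iff_prime_int.mp hl).exists_mem_finset_dvd
    ((natCast_dvd_intCast_iff hl).mp hdvd)
  exact hlm i (Finset.ne_of_mem_erase hi) hli

end TraceDescent

section ConjugationInvariants

theorem exists_mul_map_eq_sq_of_isCyclic {G : Type*} [Group G] [IsCyclic G] (f : G →* G) {z : G}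
    (hz : z ≠ 1) (hz2 : z ^ 2 = 1) (hfz : f z = z) (x : G) : ∃ y, x * f x = y ^ 2 := by
  obtain ⟨k, hk⟩ := MonoidHom.map_cyclic f
  have hkodd : Odd k := by
    by_contra heven
    obtain ⟨j, rfl⟩ := Int.not_odd_iff_even.mp heven
    apply hz
    rw [← hfz, hk, ← two_mul, zpow_mul, zpow_ofNat, hz2, one_zpow]
  obtain ⟨j, rfl⟩ := hkodd
  exact ⟨x ^ (j + 1), by rw [hk]; group⟩

theorem span_pair_mul_span_pair_of_isCoprime {R : Type*} [CommRing R] {p w w' : R}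
    (hww : p ∣ w * w') (hcop : IsCoprime p (w + w')) :
    Ideal.span {p, w} * Ideal.span {p, w'} = Ideal.span {p} := by
  rw [Ideal.span_pair_mul_span_pair]
  refine le_antisymm (Ideal.span_le.mpr ?_) ((Ideal.span_singleton_le_iff_mem _).mpr ?_)
  · rintro z (rfl | rfl | rfl | rfl)
    exacts [Ideal.mem_span_singleton.mpr (dvd_mul_right _ _),
      Ideal.mem_span_singleton.mpr (dvd_mul_right _ _),
      Ideal.mem_span_singleton.mpr (dvd_mul_left _ _), Ideal.mem_span_singleton.mpr hww]
  · obtain ⟨a, b, hab⟩ := hcop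
    have hp : a * (p * p) + b * (p * w') + b * (w * p) = p := by linear_combination p * hab
    have hmem {y : R} (r : R) (hy : y ∈ ({p * p, p * w', w * p, w * w'} : Set R)) :=
      Ideal.mul_mem_left _ r (Ideal.subset_span hy)
    have := add_mem (add_mem (hmem a (y := p * p) (by simp)) (hmem b (y := p * w') (by simp)))
      (hmem b (y := w * p) (by simp))
    rwa [hp] at this

theorem exists_associated_mul_map_of_isPrincipal_pow {R : Type*} [CommRing R] [IsDomain R]
    {c g : R →+* R} {p w : R} {n : ℕ} (hprin : (Ideal.span {p, w} ^ n).IsPrincipal)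
    (hcp : Associated (c p) p) (hcw : c w = w) (hgp : g p = p) (hww : p ∣ w * g w)
    (hcop : IsCoprime p (w + g w)) :
    ∃ a, Associated (c a) a ∧ Associated (a * g a) (p ^ n) := by
  obtain ⟨a, ha⟩ := hprin
  rw [← Ideal.span] at ha
  have hmap (f : R →+* R) : Ideal.span {f p, f w} ^ n = Ideal.span {f a} := by
    simpa only [Ideal.map_pow, Ideal.map_span, Set.image_pair, Set.image_singleton]
      using congrArg (Ideal.map f) ha
  refine ⟨a, ?_, ?_⟩ <;> rw [← Ideal.span_singleton_eq_span_singleton]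
  · rw [← hmap, ← ha, hcw, Ideal.span_insert, Ideal.span_insert p,
      Ideal.span_singleton_eq_span_singleton.mpr hcp]
  · rw [← Ideal.span_singleton_mul_span_singleton, ← ha, ← hmap, ← mul_pow, hgp,
      span_pair_mul_span_pair_of_isCoprime hww hcop, Ideal.span_singleton_pow]

variable {K : Type*} [Field K] [NumberField K]

theorem exists_mem_torsion_mul_smul_eq_sq (g : Gal(K/ℚ)) {η : (𝓞 K)ˣ}
    (hη : η ∈ Units.torsion K) : ∃ ζ ∈ Units.torsion K, (η : 𝓞 K) * g • (η : 𝓞 K) = ζ ^ 2 := by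
  let f := Units.map (MulSemiringAction.toRingHom Gal(K/ℚ) (𝓞 K) g : 𝓞 K →* 𝓞 K)
  let f' := (f.comp (Units.torsion K).subtype).codRestrict (Units.torsion K)
    fun x => MonoidHom.isOfFinOrder f x.2
  have hneg : (-1 : (𝓞 K)ˣ) ∈ Units.torsion K :=
    isOfFinOrder_iff_pow_eq_one.mpr ⟨2, two_pos, by simp⟩
  obtain ⟨ζ, hζ⟩ := exists_mul_map_eq_sq_of_isCyclic f' (z := ⟨-1, hneg⟩)
    (fun h => by simp [Subtype.ext_iff, Units.ext_iff, neg_eq_self] at h)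
    (Subtype.ext (by simp))
    (Subtype.ext (Units.ext ((smul_neg g _).trans (congrArg _ (smul_one g))))) ⟨η, hη⟩
  exact ⟨ζ, ζ.2, congrArg (fun z : Units.torsion K => ((z : (𝓞 K)ˣ) : 𝓞 K)) hζ⟩

variable {c : Gal(K/ℚ)}

theorem mem_torsion_of_smul_eq_mul (hc : ∀ φ : K →+* ℂ, ComplexEmbedding.IsConj φ c) {a : 𝓞 K}
    (ha : a ≠ 0) {η : (𝓞 K)ˣ} (h : c • a = η * a) : η ∈ Units.torsion K := by
  rw [Units.mem_torsion]
  intro v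
  have hnorm : ‖v.embedding (η * a : 𝓞 K)‖ = ‖v.embedding a‖ := by
    rw [← h, coe_smul_ringOfIntegers, (hc _).eq, norm_star]
  have ha' : ‖v.embedding (a : K)‖ ≠ 0 := by simpa using ha
  rw [← InfinitePlace.norm_embedding_eq]
  rwa [RingOfIntegers.coe_eq_algebraMap, map_mul, map_mul, norm_mul, mul_eq_right₀ ha'] at hnorm

theorem smul_mul_self_eq_one_of_mem_torsion (hc : ∀ φ : K →+* ℂ, ComplexEmbedding.IsConj φ c)
    {ζ : (𝓞 K)ˣ} (hζ : ζ ∈ Units.torsion K) : c • (ζ : 𝓞 K) * ζ = 1 := by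
  obtain ⟨φ⟩ : Nonempty (K →+* ℂ) := inferInstance
  have hnorm : ‖φ ζ‖ = 1 := (Units.mem_torsion K).mp hζ (InfinitePlace.mk φ)
  refine RingOfIntegers.ext (φ.injective ?_)
  rw [RingOfIntegers.coe_eq_algebraMap, map_mul, map_mul, ← RingOfIntegers.coe_eq_algebraMap,
    coe_smul_ringOfIntegers, (hc φ).eq, Complex.star_def,
    Complex.conj_mul', hnorm]
  simp

theorem exists_units_smul_mul_eq (h2 : ∀ g : Gal(K/ℚ), g * g = 1)
    (hc : ∀ φ : K →+* ℂ, ComplexEmbedding.IsConj φ c) (g : Gal(K/ℚ)) {a : 𝓞 K} (ha : a ≠ 0)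
    (hca : Associated (c • a) a) : ∃ ζ : (𝓞 K)ˣ, c • (ζ * (a * g • a)) = ζ * (a * g • a) := by
  obtain ⟨η, hη⟩ := hca.symm
  rw [mul_comm] at hη
  obtain ⟨ζ, hζ, hζη⟩ :=
    exists_mem_torsion_mul_smul_eq_sq g (mem_torsion_of_smul_eq_mul hc ha hη.symm)
  have hcζ := smul_mul_self_eq_one_of_mem_torsion hc hζ
  refine ⟨ζ, ?_⟩
  have hcg : c • g • a = g • c • a := by
    rw [smul_smul, mul_comm_of_forall_mul_self_eq_one h2, mul_smul]
  rw [smul_mul', smul_mul', hcg, ← hη, smul_mul']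
  linear_combination (a * g • a * c • (ζ : 𝓞 K)) * hζη + (a * g • a * ζ) * hcζ

theorem associated_smul_of_associated_sq {l : ℕ} {p : 𝓞 K} (hp : Associated (p ^ 2) l)
    (g : Gal(K/ℚ)) : Associated (g • p) p := by
  have hgp : Associated ((g • p) ^ 2) (p ^ 2) := by
    rw [← smul_pow']
    have := hp.map (MulSemiringAction.toRingHom Gal(K/ℚ) (𝓞 K) g)
    rw [map_natCast] at this
    exact this.trans hp.symm
  exact associated_of_dvd_dvd
    ((IsIntegrallyClosed.pow_dvd_pow_iff two_ne_zero).mp hgp.dvd)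
    ((IsIntegrallyClosed.pow_dvd_pow_iff two_ne_zero).mp hgp.symm.dvd)

theorem exists_smul_eq_associated_sq (hodd : Odd (classNumber K))
    (h2 : ∀ g : Gal(K/ℚ), g * g = 1) (hc : ∀ φ : K →+* ℂ, ComplexEmbedding.IsConj φ c)
    {g : Gal(K/ℚ)} {l : ℕ} (hl : l ≠ 0) {p w : 𝓞 K} (hp : Associated (p ^ 2) l)
    (hgp : g • p = p) (hcw : c • w = w) (hww : (l : 𝓞 K) ∣ w * g • w)
    (hcop : IsCoprime (l : 𝓞 K) (w + g • w)) : ∃ γ : 𝓞 K, c • γ = γ ∧ Associated (γ ^ 2) l := by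
  have hpl : p ∣ l := (dvd_pow_self p two_ne_zero).trans hp.dvd
  have hl' : (l : 𝓞 K) ≠ 0 := mod_cast hl
  have hp0 : p ≠ 0 := ne_zero_of_dvd_ne_zero hl' hpl
  obtain ⟨a, hca, ha⟩ := exists_associated_mul_map_of_isPrincipal_pow
    (c := MulSemiringAction.toRingHom _ _ c) (g := MulSemiringAction.toRingHom _ _ g)
    (isPrincipal_pow_card_classGroup (Ideal.span {p, w})) (associated_smul_of_associated_sq hp c)
    hcw hgp (hpl.trans hww) (hcop.of_isCoprime_of_dvd_left hpl)
  have ha0 : a ≠ 0 := by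
    rintro rfl
    exact pow_ne_zero _ hp0 (ha.eq_zero_iff.mp (zero_mul _))
  obtain ⟨ζ, hζ⟩ := exists_units_smul_mul_eq h2 hc g ha0 hca
  obtain ⟨s, hs⟩ := hodd
  rw [classNumber, Fintype.card_eq_nat_card] at hs
  have hassoc : Associated ((l : 𝓞 K) ^ s * p) (ζ * (a * g • a)) := by
    rw [hs, pow_succ, pow_mul] at ha
    exact ((hp.symm.pow_pow.mul_right p).trans ha.symm).trans
      (associated_unit_mul_right _ _ ζ.isUnit)
  obtain ⟨v, hv⟩ := hassoc
  refine ⟨p * v, mul_left_cancel₀ (pow_ne_zero s hl') ?_, ?_⟩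
  · rwa [← hv, mul_assoc, smul_mul', smul_pow', smul_ringOfIntegers_natCast] at hζ
  · rw [mul_pow, ← Units.val_pow_eq_pow_val]
    exact (associated_mul_unit_left _ _ (v ^ 2).isUnit).trans hp

end ConjugationInvariants

section TwoNegativeDiscriminants

theorem primeStar_eq_self_or_eq_neg {p : ℕ} (hodd : Odd p) :
    p % 4 = 1 ∧ primeStar p = p ∨ p % 4 = 3 ∧ primeStar p = -p := by
  have h4 := four_dvd_primeStar_sub_one hodd
  rcases neg_one_pow_eq_or ℤ ((p - 1) / 2) with h | h <;> rw [primeStar, h] at h4 ⊢ <;> omega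

theorem Pstar.eq_eight_or_eq_prime_of_pos {m : ℤ} (h : Pstar m) (hm : 0 < m) :
    m = 8 ∨ ∃ p : ℕ, p.Prime ∧ p % 4 = 1 ∧ m = p := by
  rcases h with rfl | rfl | rfl | ⟨p, hp, hodd, rfl⟩
  · exact Or.inl rfl
  · omega
  · omega
  · rcases primeStar_eq_self_or_eq_neg hodd with h | ⟨-, h⟩
    · exact Or.inr ⟨p, hp, h⟩
    · change 0 < primeStar p at hm
      omega

variable {K : Type*} [Field K] [NumberField K]

/-- The rational prime `l` ramifies in `ℚ(x)`, with the square of a principal prime: the square of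
some integer fixed by the stabiliser of `x` is associated to `l`. -/
def HasRamifiedElement (l : ℕ) (x : K) : Prop :=
  ∃ p : 𝓞 K, Associated (p ^ 2) l ∧ ∀ g : Gal(K/ℚ), g x = x → g • p = p

/-- The rational prime `l` splits in the quadratic field `ℚ(x)`, `x² ∈ ℚ`, witnessed by an integer
whose norm is divisible by `l` and whose trace is prime to `l`. -/
def HasSplitElement (l : ℕ) (x : K) : Prop :=
  ∃ w : 𝓞 K, ∀ g : Gal(K/ℚ), (g x = x → g • w = w) ∧
    (g x = -x → (l : 𝓞 K) ∣ w * g • w ∧ IsCoprime (l : 𝓞 K) (w + g • w))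

theorem hasRamifiedElement_of_sq_eq_neg {l : ℕ} {x y : K} (hy : y ^ 2 = (-l : ℤ))
    (hfix : ∀ g : Gal(K/ℚ), g x = x → g y = y) : HasRamifiedElement l x := by
  obtain ⟨Y, hY, hY2⟩ := exists_ringOfIntegers_sqrt hy
  refine ⟨Y, ⟨-1, ?_⟩, fun g hg => RingOfIntegers.ext ?_⟩
  · rw [hY2]
    push_cast
    ring
  · rw [coe_smul_ringOfIntegers, hY, hfix g hg]

theorem hasRamifiedElement_two_of_sq_eq_neg_four {x : K} (hx : x ^ 2 = (-4 : ℤ)) :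
    HasRamifiedElement 2 x := by
  obtain ⟨I, hI, hI2⟩ := exists_ringOfIntegers_sqrt (K := K) (x := x / 2) (d := -1)
    (by rw [div_pow, hx]; norm_num)
  push_cast at hI2
  refine ⟨1 + I, ⟨⟨-I, I, by linear_combination -hI2, by linear_combination -hI2⟩, ?_⟩,
    fun g hg => RingOfIntegers.ext ?_⟩
  · change (1 + I) ^ 2 * -I = ((2 : ℕ) : 𝓞 K)
    push_cast
    linear_combination (-2 - I) * hI2
  · change g (1 + (I : K)) = 1 + (I : K)
    rw [hI, map_add, map_one, map_div₀, hg, map_ofNat]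

theorem Pstar.exists_hasRamifiedElement {m : ℤ} (hm : Pstar m) (hneg : m < 0) {x : K}
    (hx : x ^ 2 = m) : ∃ l : ℕ, l.Prime ∧ HasRamifiedElement l x ∧
      (l = 2 ∧ (m = -4 ∨ m = -8) ∨ l % 4 = 3 ∧ m = -l) := by
  rcases hm with rfl | rfl | rfl | ⟨p, hp, hodd, rfl⟩
  · omega
  · exact ⟨2, Nat.prime_two, hasRamifiedElement_two_of_sq_eq_neg_four hx, by simp⟩
  · refine ⟨2, Nat.prime_two, hasRamifiedElement_of_sq_eq_neg (y := x / 2) ?_ fun g hg => ?_,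
      by simp⟩
    · rw [div_pow, hx]
      norm_num
    · rw [map_div₀, hg, map_ofNat]
  · change primeStar p < 0 at hneg
    change x ^ 2 = primeStar p at hx
    rcases primeStar_eq_self_or_eq_neg hodd with h | ⟨h4, h⟩
    · omega
    · exact ⟨p, hp, hasRamifiedElement_of_sq_eq_neg (h ▸ hx) fun g hg => hg, Or.inr ⟨h4, h⟩⟩

theorem hasSplitElement_two {d : ℤ} (hd : d % 8 = 1) {y : K} (hy : y ^ 2 = d) :
    HasSplitElement 2 y := by
  obtain ⟨k, rfl⟩ : ∃ k, d = 8 * k + 1 := ⟨d / 8, by omega⟩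
  let w : 𝓞 K := ⟨(1 + y) / 2, isIntegral_one_add_half (k := 2 * k) hy (by ring)⟩
  have hw2 : w ^ 2 = w + 2 * k := RingOfIntegers.ext <| by
    change ((1 + y) / 2) ^ 2 = (1 + y) / 2 + algebraMap (𝓞 K) K (2 * k)
    rw [map_mul, map_ofNat, map_intCast]
    push_cast at hy
    linear_combination hy / 4
  refine ⟨w, fun g => ⟨fun h => RingOfIntegers.ext ?_, fun h => ?_⟩⟩
  · change g ((1 + y) / 2) = (1 + y) / 2
    rw [map_div₀, map_add, map_one, map_ofNat, h]
  · have hgw : g • w = 1 - w := RingOfIntegers.ext <| by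
      change g ((1 + y) / 2) = 1 - (1 + y) / 2
      rw [map_div₀, map_add, map_one, map_ofNat, h]
      ring
    rw [hgw, add_sub_cancel]
    exact ⟨⟨-k, by push_cast; linear_combination -hw2⟩, isCoprime_one_right⟩

theorem hasSplitElement_of_dvd_sq_sub {l : ℕ} (hl : l.Prime) (hl2 : l ≠ 2) {d r : ℤ}
    (hd : ¬ (l : ℤ) ∣ d) (hr : (l : ℤ) ∣ r ^ 2 - d) {y : K} (hy : y ^ 2 = d) :
    HasSplitElement l y := by
  obtain ⟨Y, hYy, hY⟩ := exists_ringOfIntegers_sqrt hy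
  have hlZ := Nat.prime_iff_prime_int.mp hl
  have hcop : IsCoprime (l : ℤ) (2 * r) := by
    refine hlZ.coprime_iff_not_dvd.mpr fun h => (hlZ.dvd_or_dvd h).elim (fun h2 => ?_) fun hlr => ?_
    · exact hl2 ((Nat.prime_dvd_prime_iff_eq hl Nat.prime_two).mp (mod_cast h2))
    · exact hd ((dvd_sub_right (hlr.pow two_ne_zero)).mp hr)
  refine ⟨r + Y, fun g => ⟨fun h => RingOfIntegers.ext ?_, fun h => ?_⟩⟩
  · change g (algebraMap (𝓞 K) K (r + Y)) = algebraMap (𝓞 K) K (r + Y)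
    rw [map_add, map_add, map_intCast, map_intCast, ← RingOfIntegers.coe_eq_algebraMap, hYy, h]
  · have hgY : g • (r + Y) = r - Y := RingOfIntegers.ext <| by
      change g (algebraMap (𝓞 K) K (r + Y)) = algebraMap (𝓞 K) K (r - Y)
      rw [map_add, map_add, map_sub, map_intCast, map_intCast, ← RingOfIntegers.coe_eq_algebraMap,
        hYy, h, sub_eq_add_neg]
    obtain ⟨k, hk⟩ := hr
    rw [hgY]
    refine ⟨⟨k, ?_⟩, ?_⟩
    · have := congrArg (Int.cast : ℤ → 𝓞 K) hk
      push_cast at this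
      linear_combination this - hY
    · have := hcop.map (Int.castRingHom (𝓞 K))
      simp only [eq_intCast] at this
      push_cast at this
      convert this using 1
      ring

theorem exists_isSquare_zmod {l : ℕ} (hl : l.Prime) {a b : ℤ} (ha : ¬ (l : ℤ) ∣ a)
    (hb : ¬ (l : ℤ) ∣ b) : ∃ d, (d = a ∨ d = b ∨ d = a * b) ∧ IsSquare (d : ZMod l) := by
  have := Fact.mk hl
  by_cases hsa : IsSquare (a : ZMod l)
  · exact ⟨a, by simp, hsa⟩
  by_cases hsb : IsSquare (b : ZMod l)
  · exact ⟨b, by simp, hsb⟩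
  refine ⟨a * b, by simp, ?_⟩
  rw [← ZMod.intCast_zmod_eq_zero_iff_dvd] at ha hb
  push_cast
  rw [← quadraticChar_one_iff_isSquare (mul_ne_zero ha hb), map_mul,
    quadraticChar_neg_one_iff_not_isSquare.mpr hsa, quadraticChar_neg_one_iff_not_isSquare.mpr hsb,
    neg_one_mul, neg_neg]

theorem exists_hasSplitElement {l : ℕ} (hl : l.Prime) {a b : ℤ} (ha4 : a % 4 = 0 ∨ a % 4 = 1)
    (hb4 : b % 4 = 0 ∨ b % 4 = 1) (ha : ¬ (l : ℤ) ∣ a) (hb : ¬ (l : ℤ) ∣ b) :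
    ∃ d, (d = a ∨ d = b ∨ d = a * b) ∧ ∀ y : K, y ^ 2 = d → HasSplitElement l y := by
  rcases eq_or_ne l 2 with rfl | hl2
  · suffices a % 8 = 1 ∨ b % 8 = 1 ∨ a * b % 8 = 1 by
      rcases this with h | h | h
      exacts [⟨a, by simp, fun y => hasSplitElement_two h⟩,
        ⟨b, by simp, fun y => hasSplitElement_two h⟩,
        ⟨a * b, by simp, fun y => hasSplitElement_two h⟩]
    have ha8 : a % 8 = 1 ∨ a % 8 = 5 := by omega
    have hb8 : b % 8 = 1 ∨ b % 8 = 5 := by omega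
    rcases ha8 with h | h <;> rcases hb8 with h' | h' <;> simp [h, h', Int.mul_emod]
  · have hlZ := Nat.prime_iff_prime_int.mp hl
    obtain ⟨d, hd, r, hr⟩ := exists_isSquare_zmod hl ha hb
    obtain ⟨r, rfl⟩ := ZMod.intCast_surjective r
    have hld : ¬ (l : ℤ) ∣ d := by
      rcases hd with rfl | rfl | rfl
      exacts [ha, hb, hlZ.not_dvd_mul ha hb]
    refine ⟨d, hd, fun y => hasSplitElement_of_dvd_sq_sub hl hl2 hld (r := r) ?_⟩
    rw [← ZMod.intCast_zmod_eq_zero_iff_dvd]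
    push_cast
    rw [hr, pow_two, sub_self]

theorem nonneg_of_mul_apply_eq_intCast {c : Gal(K/ℚ)}
    (hc : ∀ φ : K →+* ℂ, ComplexEmbedding.IsConj φ c) {x : K} {n : ℤ} (h : x * c x = n) :
    0 ≤ n := by
  obtain ⟨φ⟩ : Nonempty (K →+* ℂ) := inferInstance
  have hφ := congrArg φ h
  rw [map_mul, (hc φ).eq, Complex.star_def, Complex.mul_conj, map_intCast] at hφ
  have hn : Complex.normSq (φ x) = (n : ℝ) := mod_cast hφ
  exact Int.cast_nonneg_iff.mp (hn ▸ Complex.normSq_nonneg (φ x))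

theorem apply_sqrt_eq_self_of_pos {c : Gal(K/ℚ)}
    (hc : ∀ φ : K →+* ℂ, ComplexEmbedding.IsConj φ c) {x : K} {m : ℤ} (hx : x ^ 2 = m)
    (hm : 0 < m) : c x = x := by
  refine (apply_sqrt_eq_or_eq_neg hx c).resolve_right fun h => ?_
  have := nonneg_of_mul_apply_eq_intCast hc (n := -m)
    (by rw [h, mul_neg, ← pow_two, hx, Int.cast_neg])
  omega

theorem apply_sqrt_eq_neg_of_neg {c : Gal(K/ℚ)}
    (hc : ∀ φ : K →+* ℂ, ComplexEmbedding.IsConj φ c) {x : K} {m : ℤ} (hx : x ^ 2 = m)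
    (hm : m < 0) : c x = -x := by
  refine (apply_sqrt_eq_or_eq_neg hx c).resolve_left fun h => ?_
  have := nonneg_of_mul_apply_eq_intCast hc (n := m) (by rw [h, ← pow_two, hx])
  omega

theorem Pstar.not_dvd_of_pos {n : ℤ} (hn : Pstar n) (hpos : 0 < n) {l : ℕ} (hl : l.Prime)
    (h : l = 2 ∧ n ≠ 8 ∨ l % 4 = 3) : ¬ (l : ℤ) ∣ n := by
  intro hln
  rcases hn.eq_eight_or_eq_prime_of_pos hpos with rfl | ⟨p, hp, hp4, rfl⟩
  · have : l ∣ 2 ^ 3 := mod_cast hln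
    have := (Nat.prime_dvd_prime_iff_eq hl Nat.prime_two).mp (hl.dvd_of_dvd_pow this)
    omega
  · have := (Nat.prime_dvd_prime_iff_eq hl hp).mp (mod_cast hln)
    omega

variable {ι : Type*} [Fintype ι] {x : ι → K} {m : ι → ℤ}

theorem IsSqrtBasis.not_hasSplitElement [IsGalois ℚ K] (hx : IsSqrtBasis x m)
    (hm : ∀ i, Pstar (m i)) (hodd : Odd (classNumber K)) (h2 : ∀ g : Gal(K/ℚ), g * g = 1)
    {c : Gal(K/ℚ)} (hc : ∀ φ : K →+* ℂ, ComplexEmbedding.IsConj φ c)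
    {i₀ : ι} (hc₀ : c (x i₀) = -x i₀)
    (hci : ∀ i, i ≠ i₀ → c (x i) = x i) {l : ℕ} (hl : l.Prime)
    (hlm : ∀ i, i ≠ i₀ → ¬ (l : ℤ) ∣ m i) (hram : HasRamifiedElement l (x i₀)) {y : K}
    (hcy : c y = y) {g : Gal(K/ℚ)} (hg : g (x i₀) = x i₀) (hgy : g y = -y) :
    ¬ HasSplitElement l y := by
  rintro ⟨w, hw⟩
  obtain ⟨p, hp, hfix⟩ := hram
  obtain ⟨γ, hcγ, hγ⟩ := exists_smul_eq_associated_sq hodd h2 hc hl.ne_zero hp (hfix g hg)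
    ((hw c).1 hcy) ((hw g).2 hgy).1 ((hw g).2 hgy).2
  exact hx.smul_ne_of_associated_sq hm h2 hc₀ hci hl hlm hγ hcγ

theorem IsSqrtBasis.exists_moved_sqrt (hx : IsSqrtBasis x m) {c : Gal(K/ℚ)} {i₀ : ι}
    (hci : ∀ i, i ≠ i₀ → c (x i) = x i) {j k : ι} (hj : j ≠ i₀) (hk : k ≠ i₀) (hjk : j ≠ k)
    {d : ℤ} (hd : d = m j ∨ d = m k ∨ d = m j * m k) :
    ∃ y : K, y ^ 2 = d ∧ c y = y ∧ ∃ g : Gal(K/ℚ), g (x i₀) = x i₀ ∧ g y = -y := by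
  have hflip (i : ι) :
      ∃ g : Gal(K/ℚ), g (x i) = -x i ∧ ∀ i', i' ≠ i → g (x i') = x i' := by
    obtain ⟨g, hneg, hfix⟩ := hx.exists_apply_eq_neg {i}
    exact ⟨g, hneg i rfl, hfix⟩
  obtain ⟨g, hgj, hg⟩ := hflip j
  obtain ⟨g', hgk, hg'⟩ := hflip k
  rcases hd with rfl | rfl | rfl
  · exact ⟨x j, hx.sq j, hci j hj, g, hg _ hj.symm, hgj⟩
  · exact ⟨x k, hx.sq k, hci k hk, g', hg' _ hk.symm, hgk⟩
  · refine ⟨x j * x k, ?_, ?_, g, hg _ hj.symm, ?_⟩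
    · rw [mul_pow, hx.sq, hx.sq, Int.cast_mul]
    · rw [map_mul, hci j hj, hci k hk]
    · rw [map_mul, hgj, hg k hjk.symm, neg_mul]

theorem IsSqrtBasis.exists_ne_neg [IsGalois ℚ K] (hx : IsSqrtBasis x m)
    (hm : ∀ i, Pstar (m i)) (hm8 : ∀ i j, m i = -4 ∨ m i = -8 → m j ≠ 8)
    (hodd : Odd (classNumber K)) (h2 : ∀ g : Gal(K/ℚ), g * g = 1) {c : Gal(K/ℚ)}
    (hc : ∀ φ : K →+* ℂ, ComplexEmbedding.IsConj φ c) {i₀ j k : ι} (hneg : m i₀ < 0)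
    (hj : j ≠ i₀) (hk : k ≠ i₀) (hjk : j ≠ k) : ∃ i, i ≠ i₀ ∧ m i < 0 := by
  by_contra! hpos
  replace hpos (i : ι) (hi : i ≠ i₀) : 0 < m i := lt_of_le_of_ne (hpos i hi) (hm i).ne_zero.symm
  have hci (i : ι) (hi : i ≠ i₀) := apply_sqrt_eq_self_of_pos hc (hx.sq i) (hpos i hi)
  obtain ⟨l, hl, hram, hlm₀⟩ := (hm i₀).exists_hasRamifiedElement hneg (hx.sq i₀)
  have hlm (i : ι) (hi : i ≠ i₀) : ¬ (l : ℤ) ∣ m i :=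
    (hm i).not_dvd_of_pos (hpos i hi) hl (hlm₀.imp (fun h => ⟨h.1, hm8 i₀ i h.2⟩) And.left)
  obtain ⟨d, hd, hsplit⟩ := exists_hasSplitElement (K := K) hl (hm j).emod_four (hm k).emod_four
    (hlm j hj) (hlm k hk)
  obtain ⟨y, hy, hcy, g, hg, hgy⟩ := hx.exists_moved_sqrt hci hj hk hjk hd
  exact hx.not_hasSplitElement hm hodd h2 hc (apply_sqrt_eq_neg_of_neg hc (hx.sq i₀) hneg) hci hl
    hlm hram hcy hg hgy (hsplit y hy)

end TwoNegativeDiscriminants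

section GenusTheory

theorem eq_of_sq_eq_sq_of_isDedekindDomain {R : Type*} [CommRing R] [IsDedekindDomain R]
    {I J : Ideal R} (h : I ^ 2 = J ^ 2) : I = J :=
  dvd_antisymm ((UniqueFactorizationMonoid.pow_dvd_pow_iff_dvd two_ne_zero).mp h.dvd)
    ((UniqueFactorizationMonoid.pow_dvd_pow_iff_dvd two_ne_zero).mp h.symm.dvd)

variable {R : Type*} [CommRing R] [CharZero R] {σ : R ≃+* R}

theorem IsQuadraticConj.intCast_dvd_intCast_iff [IsDomain R] (hσ : IsQuadraticConj ℤ σ) {a b : ℤ} :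
    (a : R) ∣ b ↔ a ∣ b := by
  refine ⟨fun ⟨x, hx⟩ => ?_, fun h => map_dvd (Int.castRingHom R) h⟩
  rcases eq_or_ne a 0 with rfl | ha
  · simpa using hx
  · obtain ⟨n, rfl⟩ := (hσ.apply_eq_self_iff x).mp <| by
      have h := congrArg σ hx
      rw [map_intCast, map_mul, map_intCast, hx] at h
      exact (mul_left_cancel₀ (mod_cast ha) h).symm
    rw [eq_intCast] at hx
    exact ⟨n, mod_cast hx⟩

variable [IsDedekindDomain R]

namespace IsQuadraticConj

omit [CharZero R] in
theorem exists_span_mul_eq_span_intCast_mul (hσ : IsQuadraticConj ℤ σ) (θ : R) {I : Ideal R}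
    (hI0 : I ≠ 0) (hI : ∀ x ∈ I, σ x ∈ I) :
    ∃ (c : ℤ) (J : Ideal R), Ideal.span {θ - σ θ} * I = Ideal.span {(c : R)} * J ∧
      J ∣ Ideal.span {θ - σ θ} := by
  obtain ⟨c, hc⟩ := (inferInstance : (I.comap (algebraMap ℤ R)).IsPrincipal)
  have hcI : Ideal.span {(c : R)} = (I.comap (algebraMap ℤ R)).map (algebraMap ℤ R) := by
    rw [hc, Ideal.submodule_span_eq, Ideal.map_span, Set.image_singleton, eq_intCast]
  obtain ⟨D, hD⟩ : I ∣ Ideal.span {(c : R)} := by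
    rw [Ideal.dvd_iff_le, hcI]
    exact Ideal.map_comap_le
  obtain ⟨J, hJ⟩ : Ideal.span {(c : R)} ∣ Ideal.span {θ - σ θ} * I := by
    rw [Ideal.dvd_iff_le, Ideal.span_singleton_mul_le_iff, hcI]
    exact fun x hx => hσ.sub_mul_mem_map_comap hI θ hx
  exact ⟨c, J, hJ, D, mul_left_cancel₀ hI0 (by rw [mul_comm I, hJ, hD]; ring)⟩

/-- An ideal whose square is generated by an integer is `σ`-stable, hence it is the extension of
an ideal of `ℤ` up to a ramified factor `J`. -/
theorem exists_sq_eq_span_intCast (hσ : IsQuadraticConj ℤ σ) {θ : R} {Δ : ℤ}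
    (hθ : (θ - σ θ) ^ 2 = Δ) (hΔ : Δ ≠ 0) {I : Ideal R} {a : ℤ} (ha : a ≠ 0)
    (hI : I ^ 2 = Ideal.span {(a : R)}) :
    ∃ (c n : ℤ) (J : Ideal R), c ≠ 0 ∧ Ideal.span {θ - σ θ} * I = Ideal.span {(c : R)} * J ∧
      J ^ 2 = Ideal.span {(n : R)} ∧ n ∣ Δ := by
  have hmap : I.map (σ : R →+* R) = I := eq_of_sq_eq_sq_of_isDedekindDomain (by
    rw [← Ideal.map_pow, hI, Ideal.map_span, Set.image_singleton, map_intCast])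
  have hI0 : I ≠ 0 := by
    rintro rfl
    simp [ha, eq_comm (a := (⊥ : Ideal R))] at hI
  obtain ⟨c, J, hJ, hJδ⟩ := hσ.exists_span_mul_eq_span_intCast_mul θ hI0 fun x hx => by
    have h := Ideal.mem_map_of_mem (σ : R →+* R) hx
    rwa [hmap] at h
  have hJ2 : Ideal.span {((c ^ 2 : ℤ) : R)} * J ^ 2 = Ideal.span {((Δ * a : ℤ) : R)} := by
    have h := congrArg (· ^ 2) hJ
    simp only [mul_pow, Ideal.span_singleton_pow, hI, hθ,
      Ideal.span_singleton_mul_span_singleton] at h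
    exact_mod_cast h.symm
  obtain ⟨n, hn⟩ : c ^ 2 ∣ Δ * a := hσ.intCast_dvd_intCast_iff.mp <| by
    rw [← Ideal.span_singleton_le_span_singleton, ← Ideal.dvd_iff_le]
    exact ⟨_, hJ2.symm⟩
  have hc0 : c ≠ 0 := by
    rintro rfl
    simp [hΔ, ha] at hn
  have hJn : J ^ 2 = Ideal.span {(n : R)} := by
    have h0 : Ideal.span {((c ^ 2 : ℤ) : R)} ≠ 0 := by simp [hc0]
    apply mul_left_cancel₀ h0
    rw [hJ2, hn, Ideal.span_singleton_mul_span_singleton, Int.cast_mul]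
  refine ⟨c, n, J, hc0, hJ, hJn, hσ.intCast_dvd_intCast_iff.mp ?_⟩
  rw [← Ideal.span_singleton_le_span_singleton, ← Ideal.dvd_iff_le, ← hJn, ← hθ,
    ← Ideal.span_singleton_pow]
  exact pow_dvd_pow_of_dvd hJδ 2

/-- By Hilbert's Theorem 90 the class of `I` contains an ideal whose square is generated by an
integer, which is in turn equivalent to a ramified ideal `J`. -/
theorem exists_mul_eq_span_singleton (hσ : IsQuadraticConj ℤ σ) {θ : R} {Δ : ℤ}
    (hθ : (θ - σ θ) ^ 2 = Δ) (hΔ : Δ ≠ 0) {I : Ideal R} {β : R} (hβ0 : β ≠ 0)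
    (hI : I ^ 2 = Ideal.span {β}) {b : ℤ} (hb : β * σ β = b ^ 2) :
    ∃ (J : Ideal R) (n : ℤ) (γ : R), J ^ 2 = Ideal.span {(n : R)} ∧ n ∣ Δ ∧
      J * I = Ideal.span {γ} := by
  have hσ1 : σ ≠ RingEquiv.refl R := by
    rintro rfl
    exact hΔ (by simpa [eq_comm] using hθ)
  obtain ⟨α, hα0, hα⟩ :=
    hσ.exists_mul_apply_eq_mul_of_mul_apply_eq_sq hσ1 (map_intCast σ b) hb
  obtain ⟨A, hA⟩ := hσ.exists_algebraMap_eq_mul α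
  rw [eq_intCast] at hA
  have hAb : α ^ 2 * β = ((A * b : ℤ) : R) := by
    push_cast
    linear_combination -α * hα - (b : R) * hA
  have hAb0 : A * b ≠ 0 := by
    intro h0
    rw [h0, Int.cast_zero] at hAb
    exact mul_ne_zero (pow_ne_zero 2 hα0) hβ0 hAb
  obtain ⟨c, n, J, hc0, hJ, hJn, hn⟩ := hσ.exists_sq_eq_span_intCast hθ hΔ hAb0
    (I := Ideal.span {α} * I) (by
      rw [mul_pow, hI, Ideal.span_singleton_pow, Ideal.span_singleton_mul_span_singleton, hAb])
  have hJI : Ideal.span {(c : R)} * (J * I) = Ideal.span {(θ - σ θ) * (α * β)} := by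
    rw [← mul_assoc, ← hJ, mul_assoc, mul_assoc, ← sq, hI]
    simp only [Ideal.span_singleton_mul_span_singleton]
  obtain ⟨γ, hγ⟩ : (c : R) ∣ (θ - σ θ) * (α * β) := by
    rw [← Ideal.span_singleton_le_span_singleton, ← Ideal.dvd_iff_le]
    exact ⟨_, hJI.symm⟩
  refine ⟨J, n, γ, hJn, hn, ?_⟩
  have h0 : Ideal.span {(c : R)} ≠ 0 := by simp [hc0]
  apply mul_left_cancel₀ h0
  rw [hJI, hγ, Ideal.span_singleton_mul_span_singleton]

end IsQuadraticConj

omit [CharZero R] in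
theorem isPrincipal_of_associated_sq {I J : Ideal R} {n γ t : R} (hn : n ≠ 0)
    (hJ : J ^ 2 = Ideal.span {n}) (hJI : J * I = Ideal.span {γ}) (ht : Associated (t ^ 2) n) :
    I.IsPrincipal := by
  obtain rfl : J = Ideal.span {t} := eq_of_sq_eq_sq_of_isDedekindDomain (by
    rw [hJ, Ideal.span_singleton_pow, Ideal.span_singleton_eq_span_singleton.mpr ht])
  have ht0 : Ideal.span {t} ≠ 0 := by
    rintro h0
    rw [h0, zero_pow two_ne_zero, eq_comm, Ideal.zero_eq_bot, Ideal.span_singleton_eq_bot] at hJ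
    exact hn hJ
  obtain ⟨a, rfl⟩ : t ∣ γ := by
    rw [← Ideal.span_singleton_le_span_singleton, ← Ideal.dvd_iff_le]
    exact ⟨I, hJI.symm⟩
  exact ⟨a, mul_left_cancel₀ ht0
    (by rw [hJI, Ideal.submodule_span_eq, Ideal.span_singleton_mul_span_singleton])⟩

end GenusTheory

section AmbiguousClasses

theorem exists_pow_eq_one_iff_isPrincipal {R : Type*} [CommRing R] [IsDedekindDomain R]
    (c : ClassGroup R) : ∃ I : Ideal R, I ≠ 0 ∧ ∀ n, c ^ n = 1 ↔ (I ^ n).IsPrincipal := by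
  obtain ⟨I, rfl⟩ := ClassGroup.mk0_surjective c
  refine ⟨I, nonZeroDivisors.ne_zero I.2, fun n => ?_⟩
  rw [← map_pow]
  exact ClassGroup.mk0_eq_one_iff (I ^ n).2

section AbsNorm

variable {R : Type*} [CommRing R] [IsDedekindDomain R] [Module.Free ℤ R] [Module.Finite ℤ R]
  (hfr : Module.finrank ℤ R = 2)
include hfr

theorem absNorm_span_intCast (n : ℤ) : Ideal.absNorm (Ideal.span {(n : R)}) = n.natAbs ^ 2 := by
  rw [Ideal.absNorm_span_singleton, ← eq_intCast (algebraMap ℤ R), Algebra.norm_algebraMap, hfr,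
    Int.natAbs_pow]

theorem absNorm_eq_natAbs_of_sq_eq {I : Ideal R} {n : ℤ} (hI : I ^ 2 = Ideal.span {(n : R)}) :
    Ideal.absNorm I = n.natAbs :=
  Nat.pow_left_injective two_ne_zero (by simp only [← map_pow, hI, absNorm_span_intCast hfr])

theorem absNorm_span_eq_natAbs {σ : R ≃+* R} {β : R} {N : ℤ} (hN : (N : R) = β * σ β) :
    Ideal.absNorm (Ideal.span {β}) = N.natAbs := by
  have hσβ : Ideal.absNorm (Ideal.span {σ β}) = Ideal.absNorm (Ideal.span {β}) := by
    rw [Ideal.absNorm_span_singleton, Ideal.absNorm_span_singleton]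
    exact congrArg _ (Algebra.norm_eq_of_algEquiv σ.toIntAlgEquiv β)
  refine Nat.pow_left_injective two_ne_zero ?_
  simp only [← absNorm_span_intCast hfr N, hN, ← Ideal.span_singleton_mul_span_singleton, map_mul,
    hσβ, sq]

end AbsNorm

namespace IsQuadraticConj

variable {R : Type*} [CommRing R] [CharZero R] {σ : R ≃+* R}
  (hσ : IsQuadraticConj ℤ σ) {θ : R} {Δ : ℤ} (hθ : (θ - σ θ) ^ 2 = Δ)
include hσ hθ

theorem exists_norm_eq_intCast (β : R) :
    ∃ N a c : ℤ, (N : R) = β * σ β ∧ 4 * Δ * N = Δ * a ^ 2 - c ^ 2 := by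
  obtain ⟨N, hN⟩ := hσ.exists_algebraMap_eq_mul β
  obtain ⟨a, ha⟩ := hσ.exists_algebraMap_eq_add β
  obtain ⟨c, hc⟩ := (hσ.apply_eq_self_iff ((β - σ β) * (θ - σ θ))).mp (by
    rw [map_mul, map_sub, map_sub, hσ.involutive, hσ.involutive]
    ring)
  rw [eq_intCast] at hN ha hc
  refine ⟨N, a, c, hN, Int.cast_injective (α := R) ?_⟩
  push_cast
  rw [hN, ha, hc, ← hθ]
  ring

variable [IsDedekindDomain R] [Module.Free ℤ R] [Module.Finite ℤ R]
  (hfr : Module.finrank ℤ R = 2)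
include hfr

theorem exists_absNorm_span_eq (hΔ : Δ < 0) (β : R) :
    β * σ β = Ideal.absNorm (Ideal.span {β}) ∧
      ∃ x y : ℚ, x ^ 2 - Δ * y ^ 2 = Ideal.absNorm (Ideal.span {β}) := by
  obtain ⟨N, a, c, hN, hNac⟩ := hσ.exists_norm_eq_intCast hθ β
  have hN0 : 0 ≤ N := by nlinarith [sq_nonneg a, sq_nonneg c]
  have habs : ((Ideal.absNorm (Ideal.span {β}) : ℕ) : ℤ) = N := by
    rw [absNorm_span_eq_natAbs hfr hN, Int.natAbs_of_nonneg hN0]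
  refine ⟨by rw [← hN, ← habs, Int.cast_natCast], a / 2, c / (2 * Δ), ?_⟩
  have hΔ0 : (Δ : ℚ) ≠ 0 := mod_cast hΔ.ne
  have hNac' : (4 * Δ * N : ℚ) = Δ * a ^ 2 - c ^ 2 := mod_cast hNac
  rw [← Int.cast_natCast (R := ℚ) (Ideal.absNorm _), habs]
  field_simp
  linear_combination -hNac'

theorem exists_ramified_mul_eq_span_singleton (hΔ : Δ < 0) {I : Ideal R} (hI0 : I ≠ 0)
    (hI : (I ^ 2).IsPrincipal) :
    ∃ (J : Ideal R) (n : ℤ) (γ : R), J ^ 2 = Ideal.span {(n : R)} ∧ n ∣ Δ ∧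
      J * I = Ideal.span {γ} := by
  obtain ⟨β, hβ⟩ := hI
  rw [Ideal.submodule_span_eq] at hβ
  have hβ0 : β ≠ 0 := by
    rintro rfl
    exact pow_ne_zero 2 hI0 (by simpa using hβ)
  refine hσ.exists_mul_eq_span_singleton hθ hΔ.ne hβ0 hβ (b := Ideal.absNorm I) ?_
  rw [(hσ.exists_absNorm_span_eq hθ hfr hΔ β).1, ← hβ, map_pow]
  push_cast
  rfl

theorem eq_one_of_sq_eq_one (hΔ : Δ < 0)
    (H : ∀ n : ℤ, n ∣ Δ → ∃ t : R, Associated (t ^ 2) n) {c : ClassGroup R} (hc : c ^ 2 = 1) :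
    c = 1 := by
  obtain ⟨I, hI0, hI⟩ := exists_pow_eq_one_iff_isPrincipal c
  obtain ⟨J, n, γ, hJ, hn, hJI⟩ :=
    hσ.exists_ramified_mul_eq_span_singleton hθ hfr hΔ hI0 ((hI 2).mp hc)
  obtain ⟨t, ht⟩ := H n hn
  rw [← pow_one c, hI 1, pow_one]
  exact isPrincipal_of_associated_sq (mod_cast ne_zero_of_dvd_ne_zero hΔ.ne hn) hJ hJI ht

/-- For a class `c` of order dividing four, the ramified ideal equivalent to `c ^ 2` has a norm
that is represented by the rational norm form up to squares. -/
theorem sq_eq_one_of_pow_four_eq_one (hΔ : Δ < 0)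
    (H : ∀ n : ℤ, n ∣ Δ → (∃ x y a : ℚ, a ≠ 0 ∧ x ^ 2 - Δ * y ^ 2 = n.natAbs * a ^ 2) →
      ∃ t : R, Associated (t ^ 2) n)
    {c : ClassGroup R} (hc : c ^ 4 = 1) : c ^ 2 = 1 := by
  obtain ⟨I, hI0, hI⟩ := exists_pow_eq_one_iff_isPrincipal c
  obtain ⟨J, n, γ, hJ, hn, hJI⟩ := hσ.exists_ramified_mul_eq_span_singleton hθ hfr hΔ
    (pow_ne_zero 2 hI0) (by rw [← pow_mul]; exact (hI 4).mp hc)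
  obtain ⟨x, y, hxy⟩ := (hσ.exists_absNorm_span_eq hθ hfr hΔ γ).2
  rw [← hJI, map_mul, map_pow, absNorm_eq_natAbs_of_sq_eq hfr hJ] at hxy
  obtain ⟨t, ht⟩ := H n hn ⟨x, y, Ideal.absNorm I,
    mod_cast Ideal.absNorm_eq_zero_iff.not.mpr hI0, mod_cast hxy⟩
  rw [hI 2]
  exact isPrincipal_of_associated_sq (mod_cast ne_zero_of_dvd_ne_zero hΔ.ne hn) hJ hJI ht

end IsQuadraticConj

end AmbiguousClasses

section TernaryForms

theorem exists_primitive_int_multiple {ι : Type*} [Fintype ι] {v : ι → ℚ} (hv : v ≠ 0) :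
    ∃ (c : ℚ) (w : ι → ℤ), (∀ i, (w i : ℚ) = c * v i) ∧ Finset.univ.gcd w = 1 := by
  obtain ⟨i₀, hi₀⟩ := Function.ne_iff.mp hv
  obtain ⟨b, hb⟩ := IsLocalization.exist_integer_multiples_of_finite (nonZeroDivisors ℤ) v
  choose w hw using hb
  have hb0 : ((b : ℤ) : ℚ) ≠ 0 := Int.cast_ne_zero.mpr (nonZeroDivisors.ne_zero b.2)
  have hw' (i : ι) : (w i : ℚ) = (b : ℤ) * v i := by
    rw [← zsmul_eq_mul]
    exact hw i
  obtain ⟨g, hg, hg1⟩ := Finset.extract_gcd w ⟨i₀, Finset.mem_univ i₀⟩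
  have hd : ((Finset.univ.gcd w : ℤ) : ℚ) ≠ 0 := by
    refine Int.cast_ne_zero.mpr fun h => mul_ne_zero hb0 hi₀ ?_
    rw [← hw', Finset.gcd_eq_zero_iff.mp h i₀ (Finset.mem_univ i₀), Int.cast_zero]
  refine ⟨(b : ℤ) / (Finset.univ.gcd w : ℤ), g, fun i => ?_, hg1⟩
  rw [div_mul_eq_mul_div, ← hw', eq_div_iff hd, mul_comm, ← Int.cast_mul,
    ← hg i (Finset.mem_univ i)]

theorem isCoprime_of_sq_eq_mul_sq_add_mul_sq {a b x y z : ℤ} (ha : Squarefree a)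
    (hb : Squarefree b) (hab : IsCoprime a b) (h : x ^ 2 = a * y ^ 2 + b * z ^ 2)
    (hprim : ∀ l : ℤ, Prime l → l ∣ x → l ∣ y → ¬ l ∣ z) : IsCoprime x (a * y ^ 2) := by
  have dvd_of_sq_dvd {l c t : ℤ} (hl : Prime l) (hc : Squarefree c) (h : l ^ 2 ∣ c * t ^ 2) :
      l ∣ t := by
    by_contra hlt
    have hcop : IsCoprime (l ^ 2) (t ^ 2) := ((hl.coprime_iff_not_dvd).mpr hlt).pow
    exact hl.not_isUnit (hc l (sq l ▸ hcop.dvd_of_dvd_mul_right h))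
  rw [Int.isCoprime_iff_gcd_eq_one]
  by_contra hgcd
  obtain ⟨l, hl, hx, hy⟩ := Nat.Prime.not_coprime_iff_dvd.mp hgcd
  rw [← Int.natCast_dvd] at hx hy
  replace hl := Nat.prime_iff_prime_int.mp hl
  have hx2 : (l : ℤ) ^ 2 ∣ x ^ 2 := pow_dvd_pow_of_dvd hx 2
  have hz : (l : ℤ) ∣ b * z ^ 2 :=
    (dvd_add_right hy).mp (h ▸ hx.trans (dvd_pow_self x two_ne_zero))
  rcases hl.dvd_or_dvd hy with hla | hly
  · have hlb : ¬ (l : ℤ) ∣ b := fun hlb => hl.not_isUnit (hab.isUnit_of_dvd' hla hlb)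
    have hlz := hl.dvd_of_dvd_pow ((hl.dvd_or_dvd hz).resolve_left hlb)
    refine hprim l hl hx (dvd_of_sq_dvd hl ha ?_) hlz
    rw [← dvd_add_left ((pow_dvd_pow_of_dvd hlz 2).mul_left b), ← h]
    exact hx2
  · have hly := hl.dvd_of_dvd_pow hly
    refine hprim l hl hx hly (dvd_of_sq_dvd hl hb ?_)
    rw [← dvd_add_right ((pow_dvd_pow_of_dvd hly 2).mul_left a), ← h]
    exact hx2

theorem exists_isCoprime_of_sq_eq_mul_sq_add_mul_sq {a b : ℤ} (ha : Squarefree a)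
    (hb : Squarefree b) (hab : IsCoprime a b) {x y z : ℚ} (h : x ^ 2 = a * y ^ 2 + b * z ^ 2)
    (h0 : ![x, y, z] ≠ 0) :
    ∃ X Y Z : ℤ, X ^ 2 = a * Y ^ 2 + b * Z ^ 2 ∧ IsCoprime X (a * Y ^ 2) ∧
      IsCoprime X (b * Z ^ 2) := by
  obtain ⟨c, w, hw, hgcd⟩ := exists_primitive_int_multiple h0
  have hx : (w 0 : ℚ) = c * x := hw 0
  have hy : (w 1 : ℚ) = c * y := hw 1
  have hz : (w 2 : ℚ) = c * z := hw 2
  have heq : w 0 ^ 2 = a * w 1 ^ 2 + b * w 2 ^ 2 := by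
    rw [← Int.cast_inj (α := ℚ)]
    push_cast
    rw [hx, hy, hz]
    linear_combination c ^ 2 * h
  have hprim (l : ℤ) (hl : Prime l) (h0 : l ∣ w 0) (h1 : l ∣ w 1) (h2 : l ∣ w 2) : False := by
    refine hl.not_isUnit (isUnit_of_dvd_one (hgcd ▸ Finset.dvd_gcd fun i _ => ?_))
    fin_cases i
    exacts [h0, h1, h2]
  exact ⟨w 0, w 1, w 2, heq, isCoprime_of_sq_eq_mul_sq_add_mul_sq ha hb hab heq hprim,
    isCoprime_of_sq_eq_mul_sq_add_mul_sq hb ha hab.symm (by rw [heq, add_comm])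
      fun l hl h0 h2 h1 => hprim l hl h0 h1 h2⟩

/-- In terms of Hilbert symbols: `(P, -1) = 1` and `(P, R) = 1` imply `(P, -R) = 1`. -/
theorem exists_sq_eq_neg_mul_sq_add_mul_sq {F : Type*} [Field F] {P R r t A X Y : F} (ht : t ≠ 0)
    (hP : P = r ^ 2 + t ^ 2) (hA : A ≠ 0) (h : A ^ 2 = P * X ^ 2 + R * Y ^ 2) :
    ∃ x y z : F, x ^ 2 = -R * y ^ 2 + P * z ^ 2 ∧ ![x, y, z] ≠ 0 := by
  refine ⟨A * r + P * X, Y * t, A + r * X,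
    by linear_combination (r ^ 2 - P) * h - R * Y ^ 2 * hP, fun h0 => hA ?_⟩
  have hY : Y = 0 := (mul_eq_zero.mp (congrFun h0 1)).resolve_right ht
  have hAX : A + r * X = 0 := congrFun h0 2
  have hX : t ^ 2 * X ^ 2 = 0 := by
    rw [hY] at h
    linear_combination (A - r * X) * hAX - h - X ^ 2 * hP
  rw [(pow_eq_zero_iff two_ne_zero).mp ((mul_eq_zero.mp hX).resolve_left (pow_ne_zero 2 ht)),
    mul_zero, add_zero] at hAX
  exact hAX

theorem emod_eight_eq_one_of_sq_add_mul_sq {p : ℕ} (hp : p.Prime) (hp4 : p % 4 = 1) {x y a : ℚ}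
    (ha : a ≠ 0) (h : x ^ 2 + p * y ^ 2 = 2 * a ^ 2) : p % 8 = 1 := by
  have hpp : Prime (p : ℤ) := Nat.prime_iff_prime_int.mp hp
  have hcop : IsCoprime (2 : ℤ) (-p) := by
    rw [isCoprime_comm, Int.isCoprime_two_right, Int.odd_iff]
    omega
  obtain ⟨U, V, W, hE, hUV, -⟩ := exists_isCoprime_of_sq_eq_mul_sq_add_mul_sq
    Int.prime_two.squarefree hpp.neg.squarefree hcop (x := x) (y := a) (z := y)
    (by push_cast; linear_combination h) fun h0 => ha (congrFun h0 1)
  have := Fact.mk hp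
  have hEp : (U : ZMod p) ^ 2 = 2 * (V : ZMod p) ^ 2 := by
    simpa using congrArg (Int.cast : ℤ → ZMod p) hE
  have hV : (V : ZMod p) ≠ 0 := by
    intro hV
    have hU : (U : ZMod p) = 0 := by simpa [hV] using hEp
    rw [ZMod.intCast_zmod_eq_zero_iff_dvd] at hV hU
    exact hpp.not_isUnit (hUV.isUnit_of_dvd' hU
      ((hV.trans (dvd_pow_self V two_ne_zero)).mul_left 2))
  have hsq : IsSquare (2 : ZMod p) := ⟨U / V, by field_simp; exact hEp.symm⟩
  rw [ZMod.exists_sq_eq_two_iff (by omega)] at hsq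
  omega

end TernaryForms

section RedeiSymbols

theorem exists_sq_add_sq_eq_of_emod_eight_eq_one {p : ℕ} (hp : p.Prime) (hp8 : p % 8 = 1) :
    ∃ r s : ℤ, r ^ 2 + s ^ 2 = p ∧ 4 ∣ s := by
  have four_dvd {r s : ℤ} (hrs : r ^ 2 + s ^ 2 = p) (hr : Odd r) : 4 ∣ s := by
    have hr8 := Int.eight_dvd_sq_sub_one_of_odd hr
    have hs8 : s ^ 2 % 8 = 0 := by omega
    obtain ⟨t, rfl⟩ : 2 ∣ s := Int.prime_two.dvd_of_dvd_pow (n := 2) (by omega)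
    have ht : 2 ∣ t := Int.prime_two.dvd_of_dvd_pow (n := 2) (by rw [mul_pow] at hs8; omega)
    exact mul_dvd_mul_left 2 ht
  have := Fact.mk hp
  obtain ⟨r, s, hrs⟩ := Nat.Prime.sq_add_sq (p := p) (by omega)
  have hrs' : (r : ℤ) ^ 2 + (s : ℤ) ^ 2 = p := mod_cast hrs
  rcases Int.even_or_odd r with hr | hr
  · have hs : Odd (s : ℤ) := by
      have hp : Odd (p : ℤ) := by rw [Int.odd_iff]; omega
      rw [← hrs', Int.odd_add'] at hp
      exact Int.odd_pow' two_ne_zero |>.mp (hp.mpr (hr.pow_of_ne_zero two_ne_zero))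
    rw [add_comm] at hrs'
    exact ⟨s, r, hrs', four_dvd hrs' hs⟩
  · exact ⟨r, s, hrs', four_dvd hrs' hr⟩

theorem even_or_even_of_sq_eq_mul_sq_add_mul_sq {a b x y z : ℤ} (ha : a % 4 = 1 ∨ a % 4 = 2)
    (hb : b % 4 = 1) (h : x ^ 2 = a * y ^ 2 + b * z ^ 2) (hcop : IsCoprime x (a * y ^ 2)) :
    Even y ∨ a % 4 = 1 ∧ Even z := by
  have sq_emod (t : ℤ) : t ^ 2 % 4 = 0 ∨ t ^ 2 % 4 = 1 := by
    rcases Int.even_or_odd t with ht | ht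
    · exact .inl (Int.emod_eq_zero_of_dvd (pow_dvd_pow_of_dvd ht.two_dvd 2))
    · exact .inr (Int.sq_mod_four_eq_one_of_odd ht)
  have hmod : x ^ 2 % 4 = (a % 4 * (y ^ 2 % 4) + b % 4 * (z ^ 2 % 4)) % 4 := by
    rw [h, Int.add_emod, Int.mul_emod, Int.mul_emod b]
    simp only [Int.emod_emod_of_dvd, dvd_refl, Int.add_emod]
  by_contra! hyz
  rw [Int.not_even_iff_odd, Int.not_even_iff_odd] at hyz
  rw [Int.sq_mod_four_eq_one_of_odd hyz.1, hb] at hmod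
  rcases ha with ha | ha
  · rw [Int.sq_mod_four_eq_one_of_odd (hyz.2 ha), ha] at hmod
    rcases sq_emod x with hx | hx <;> omega
  · have hx : Odd x := Int.isCoprime_two_right.mp
      (hcop.of_isCoprime_of_dvd_right (Dvd.dvd.mul_right (by omega) _))
    rw [Int.sq_mod_four_eq_one_of_odd hx, ha] at hmod
    rcases sq_emod z with hz | hz <;> omega

variable {K : Type*} [Field K] [NumberField K]

/-- A residue `r` of `x` modulo four for which `x + y √a` is a square modulo four; the roots are
`1`, and `1 + √a` when `a` and `y / 2` are congruent to `2` and odd respectively. -/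
theorem exists_forall_four_dvd_add_mul_sqrt_sub_sq {a y : ℤ}
    (hy : 4 ∣ y ∨ Even y ∧ (a % 4 = 1 ∨ a % 4 = 2)) :
    ∃ r : ℤ, Odd r ∧ ∀ x : ℤ, 4 ∣ x - r → ∀ A : 𝓞 K, A ^ 2 = a →
      ∃ κ : 𝓞 K, 4 ∣ x + y * A - κ ^ 2 := by
  have of_four_dvd (hy : 4 ∣ y) : ∀ x : ℤ, 4 ∣ x - 1 → ∀ A : 𝓞 K, A ^ 2 = a →
      ∃ κ : 𝓞 K, 4 ∣ x + y * A - κ ^ 2 := by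
    rintro x ⟨j, hj⟩ A -
    obtain ⟨f, rfl⟩ := hy
    refine ⟨1, j + f * A, ?_⟩
    rw [eq_add_of_sub_eq hj]
    push_cast
    ring
  rcases hy with hy | ⟨⟨y', rfl⟩, ha | ha⟩
  · exact ⟨1, odd_one, of_four_dvd hy⟩
  · refine ⟨1 + 2 * y', odd_one.add_even (even_two_mul y'), fun x ⟨j, hj⟩ A hA => ?_⟩
    have hH : IsIntegral ℤ ((1 + (A : K)) / 2) := by
      refine isIntegral_one_add_half (d := a) (k := a / 4) ?_ (by omega)
      simpa using congrArg (algebraMap (𝓞 K) K) hA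
    refine ⟨1, j + y' * ⟨_, hH⟩, RingOfIntegers.ext ?_⟩
    rw [eq_add_of_sub_eq hj]
    change ((4 * j + (1 + 2 * y') : ℤ) : K) + ((y' + y' : ℤ) : K) * A - 1 ^ 2 =
      4 * (j + y' * ((1 + A) / 2))
    push_cast
    ring
  · rcases Int.even_or_odd' y' with ⟨f, rfl | rfl⟩
    · exact ⟨1, odd_one, of_four_dvd ⟨f, by ring⟩⟩
    · refine ⟨1 + a, Int.odd_iff.mpr (by omega), fun x ⟨j, hj⟩ A hA => ⟨1 + A, j + f * A, ?_⟩⟩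
      rw [eq_add_of_sub_eq hj]
      push_cast
      linear_combination -hA

variable [IsTotallyComplex K] (hodd : Odd (classNumber K)) {g : Gal(K/ℚ)} (hg : g * g = 1)
include hodd hg

theorem NegatesSqrt.not_negatesSqrt_of_even {a b x y z : ℤ} (ha : NegatesSqrt g a)
    (h : x ^ 2 = a * y ^ 2 + b * z ^ 2) (hcop : IsCoprime x (a * y ^ 2))
    (hy : 4 ∣ y ∨ Even y ∧ (a % 4 = 1 ∨ a % 4 = 2)) : ¬ NegatesSqrt g b := by
  have hy2 : Even (a * y ^ 2) := by
    have : Even y := hy.elim (fun h => even_iff_two_dvd.mpr (dvd_trans (by norm_num) h)) And.left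
    exact (this.pow_of_ne_zero two_ne_zero).mul_left a
  have hx : Odd x := Int.isCoprime_two_right.mp (hcop.of_isCoprime_of_dvd_right hy2.two_dvd)
  have hbz : Odd (b * z ^ 2) := by
    rw [← add_sub_cancel_left (a * y ^ 2) (b * z ^ 2), ← h]
    exact hx.pow.sub_even hy2
  obtain ⟨r, hr, hκ⟩ := exists_forall_four_dvd_add_mul_sqrt_sub_sq (K := K) hy
  have hxr : 4 ∣ x - r ∨ 4 ∣ -x - r := by
    rw [Int.odd_iff] at hx hr
    omega
  rcases hxr with hxr | hxr
  · exact ha.not_negatesSqrt_of_ternary hodd hg h hbz hcop (hκ x hxr)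
  · exact ha.not_negatesSqrt_of_ternary hodd hg (by rwa [neg_sq]) hbz hcop.neg_left (hκ (-x) hxr)

/-- The Rédei-type obstruction: if an involution of `K` negates both `√a` and `√b`, then the
conic `x ^ 2 = a * y ^ 2 + b * z ^ 2` has no coprime integral point. -/
theorem NegatesSqrt.not_isCoprime_of_sq_eq {a b x y z : ℤ} (hna : NegatesSqrt g a)
    (hnb : NegatesSqrt g b) (ha : a % 4 = 1 ∨ a % 4 = 2) (hb : b % 4 = 1)
    (h : x ^ 2 = a * y ^ 2 + b * z ^ 2) (hy : IsCoprime x (a * y ^ 2)) :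
    ¬ IsCoprime x (b * z ^ 2) := by
  intro hz
  rcases even_or_even_of_sq_eq_mul_sq_add_mul_sq ha hb h hy with hev | ⟨-, hev⟩
  · exact hna.not_negatesSqrt_of_even hodd hg h hy (.inr ⟨hev, ha⟩) hnb
  · exact hnb.not_negatesSqrt_of_even hodd hg (h.trans (add_comm _ _)) hz (.inr ⟨hev, .inl hb⟩) hna

theorem NegatesSqrt.sq_ne_mul_sq_add_mul_sq {a b : ℤ} (hna : NegatesSqrt g a)
    (hnb : NegatesSqrt g b) (ha : Squarefree a) (hb : Squarefree b) (hab : IsCoprime a b)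
    (ha4 : a % 4 = 1 ∨ a % 4 = 2) (hb4 : b % 4 = 1 ∨ b % 4 = 2) {x y z : ℚ}
    (h0 : ![x, y, z] ≠ 0) : x ^ 2 ≠ a * y ^ 2 + b * z ^ 2 := by
  intro h
  obtain ⟨X, Y, Z, hE, hY, hZ⟩ := exists_isCoprime_of_sq_eq_mul_sq_add_mul_sq ha hb hab h h0
  rcases hb4 with hb4 | hb4
  · exact hna.not_isCoprime_of_sq_eq hodd hg hnb ha4 hb4 hE hY hZ
  · have ha4 : a % 4 = 1 := ha4.resolve_right fun ha4 => by
      exact Int.prime_two.not_isUnit (hab.isUnit_of_dvd' (by omega) (by omega))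
    exact hnb.not_isCoprime_of_sq_eq hodd hg hna (.inr hb4) ha4 (hE.trans (add_comm _ _)) hZ hY

theorem NegatesSqrt.emod_eight_ne_one (hna : NegatesSqrt g (-1)) {p : ℕ}
    (hp : p.Prime) (hnb : NegatesSqrt g p) : p % 8 ≠ 1 := by
  intro hp8
  obtain ⟨r, s, hrs, hs⟩ := exists_sq_add_sq_eq_of_emod_eight_eq_one hp hp8
  have hE : r ^ 2 = -1 * s ^ 2 + p * 1 ^ 2 := by rw [← hrs]; ring
  refine hna.not_negatesSqrt_of_even hodd hg hE ?_ (.inl hs) hnb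
  exact isCoprime_of_sq_eq_mul_sq_add_mul_sq isUnit_one.neg.squarefree
    (Nat.prime_iff_prime_int.mp hp).squarefree isCoprime_one_left.neg_left hE
    fun l hl _ _ h1 => hl.not_isUnit (isUnit_of_dvd_one h1)

end RedeiSymbols

section PrimeDiscriminantPairs

theorem exists_sq_eq_of_sq_eq_sq_mul {R : Type*} [CommRing R] [IsDomain R] [IsIntegrallyClosed R]
    {δ a b : R} (ha : a ≠ 0) (h : δ ^ 2 = a ^ 2 * b) : ∃ ω : R, ω ^ 2 = b := by
  obtain ⟨ω, rfl⟩ := (IsIntegrallyClosed.pow_dvd_pow_iff two_ne_zero).mp (Dvd.intro b h.symm)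
  exact ⟨ω, mul_left_cancel₀ (pow_ne_zero 2 ha) (by rw [← h, mul_pow])⟩

theorem exists_natAbs_eq_sq_mul {n Δ : ℤ} {M k : ℕ} (hΔ : Δ ≠ 0) (hn : n ∣ Δ) (hM : Δ ∣ M ^ k)
    (hk : k ≠ 0) : ∃ h f : ℕ, h ≠ 0 ∧ n.natAbs = h ^ 2 * f ∧ f ∣ M := by
  obtain ⟨f, h, hf, hsq⟩ := Nat.sq_mul_squarefree n.natAbs
  have hn0 : n.natAbs ≠ 0 := Int.natAbs_ne_zero.mpr (ne_zero_of_dvd_ne_zero hΔ hn)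
  refine ⟨h, f, ?_, hf.symm, (hsq.dvd_pow_iff_dvd hk).mp ?_⟩
  · rintro rfl
    exact hn0 (by rw [← hf, zero_pow two_ne_zero, zero_mul])
  · rw [← Int.natCast_dvd_natCast, Nat.cast_pow]
    exact (Int.natCast_dvd.mpr (Dvd.intro_left _ hf)).trans (hn.trans hM)

theorem associated_intCast_of_natAbs {R : Type*} [CommRing R] {x : R} {n : ℤ}
    (h : Associated x n.natAbs) : Associated x n := by
  rcases Int.natAbs_eq n with hn | hn <;> rw [hn]
  · simpa using h
  · simpa using h.neg_right

theorem exists_associated_sq_of_natAbs_eq {R : Type*} [CommRing R] {τ : R} {n : ℤ} {h f : ℕ}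
    (hτ : Associated (τ ^ 2) (f : R)) (hn : n.natAbs = h ^ 2 * f) :
    ∃ t : R, Associated (t ^ 2) n := by
  refine ⟨h * τ, associated_intCast_of_natAbs ?_⟩
  rw [hn, mul_pow, Nat.cast_mul, Nat.cast_pow]
  exact hτ.mul_left _

theorem associated_sq_natCast_of_sq_eq_neg {R : Type*} [CommRing R] {ω : R} {N : ℕ}
    (hω : ω ^ 2 = -N) : Associated (ω ^ 2) (N : R) := by
  rw [hω]
  exact (Associated.refl _).neg_left

theorem Pstar.exists_eq_neg_sq_mul {m : ℤ} (hm : Pstar m) (hneg : m < 0) (h4 : m ≠ -4) :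
    ∃ s l : ℕ, s ≠ 0 ∧ l.Prime ∧ m = -((s : ℤ) ^ 2 * l) ∧ m ∣ (l : ℤ) ^ 3 ∧
      (l % 4 = 3 ∨ l = 2 ∧ m = -8) := by
  rcases hm with rfl | rfl | rfl | ⟨p, hp, hodd, rfl⟩
  · omega
  · omega
  · exact ⟨2, 2, by norm_num, Nat.prime_two, by norm_num, by norm_num, .inr ⟨rfl, rfl⟩⟩
  · change primeStar p < 0 at hneg
    rcases primeStar_eq_self_or_eq_neg hodd with ⟨-, h⟩ | ⟨h4, h⟩
    · omega
    · change primeStar p = -p at h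
      refine ⟨1, p, one_ne_zero, hp, ?_, ?_, .inl h4⟩
      · change primeStar p = _
        rw [h, Nat.cast_one, one_pow, one_mul]
      · change primeStar p ∣ _
        rw [h, neg_dvd]
        exact dvd_pow_self _ three_ne_zero

theorem Pstar.exists_eq_sq_mul {n : ℤ} (hn : Pstar n) (hpos : 0 < n) :
    ∃ s l : ℕ, s ≠ 0 ∧ l.Prime ∧ n = (s : ℤ) ^ 2 * l ∧ n ∣ (l : ℤ) ^ 3 ∧
      (l % 4 = 1 ∨ l = 2 ∧ n = 8) := by
  rcases hn.eq_eight_or_eq_prime_of_pos hpos with rfl | ⟨p, hp, hp4, rfl⟩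
  · exact ⟨2, 2, by norm_num, Nat.prime_two, by norm_num, by norm_num, .inr ⟨rfl, rfl⟩⟩
  · exact ⟨1, p, one_ne_zero, hp, by simp, dvd_pow_self _ three_ne_zero, .inl hp4⟩

namespace IsQuadraticConj

variable {R : Type*} [CommRing R] [IsDedekindDomain R] [CharZero R] [Module.Free ℤ R]
  [Module.Finite ℤ R] {σ : R ≃+* R} (hσ : IsQuadraticConj ℤ σ) {θ : R}
  (hfr : Module.finrank ℤ R = 2) {c : ClassGroup R}
include hσ hfr

omit [Module.Free ℤ R] [Module.Finite ℤ R] hσ hfr in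
theorem exists_sq_eq_neg {N s : ℕ} (hs : s ≠ 0)
    (hθ : (θ - σ θ) ^ 2 = (-((s : ℤ) ^ 2 * N) : ℤ)) : ∃ ω : R, ω ^ 2 = -N :=
  exists_sq_eq_of_sq_eq_sq_mul (Nat.cast_ne_zero.mpr hs)
    (by rw [hθ]; push_cast; rw [mul_neg])

theorem eq_one_of_sq_eq_one_of_neg_four (hθ : (θ - σ θ) ^ 2 = (-4 : ℤ)) (hc : c ^ 2 = 1) :
    c = 1 := by
  obtain ⟨ω, hω⟩ := exists_sq_eq_neg (N := 1) (s := 2) two_ne_zero (by simpa using hθ)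
  rw [Nat.cast_one] at hω
  refine hσ.eq_one_of_sq_eq_one hθ hfr (by norm_num) (fun n hn => ?_) hc
  obtain ⟨h, f, -, hnf, hf⟩ :=
    exists_natAbs_eq_sq_mul (M := 2) (k := 2) (by norm_num) hn (by norm_num) two_ne_zero
  refine exists_associated_sq_of_natAbs_eq ?_ hnf (τ := if f = 1 then 1 else 1 + ω)
  rcases (Nat.dvd_prime Nat.prime_two).mp hf with rfl | rfl
  · simp
  · have hω_unit : IsUnit ω := .of_mul_eq_one (-ω) (by linear_combination -hω)
    rw [if_neg (by norm_num), show (1 + ω) ^ 2 = (2 : ℕ) * ω by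
      push_cast; linear_combination hω]
    exact associated_mul_unit_left _ _ hω_unit

theorem eq_one_of_sq_eq_one_of_pstar {m : ℤ} (hm : Pstar m) (hneg : m < 0)
    (hθ : (θ - σ θ) ^ 2 = m) (hc : c ^ 2 = 1) : c = 1 := by
  by_cases h4 : m = -4
  · exact hσ.eq_one_of_sq_eq_one_of_neg_four hfr (h4 ▸ hθ) hc
  obtain ⟨s, l, hs, hl, hml, hdvd, -⟩ := hm.exists_eq_neg_sq_mul hneg h4
  obtain ⟨ω, hω⟩ := exists_sq_eq_neg hs (hml ▸ hθ)
  refine hσ.eq_one_of_sq_eq_one hθ hfr hneg (fun n hn => ?_) hc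
  obtain ⟨h, f, -, hnf, hf⟩ := exists_natAbs_eq_sq_mul hneg.ne hn hdvd three_ne_zero
  rcases (Nat.dvd_prime hl).mp hf with rfl | rfl
  · exact exists_associated_sq_of_natAbs_eq (τ := 1) (by simp) hnf
  · exact exists_associated_sq_of_natAbs_eq (associated_sq_natCast_of_sq_eq_neg hω) hnf

theorem sq_eq_one_of_pow_four_eq_one_of_forall_ne {P Q s k : ℕ} (hP : P.Prime) (hQ : Q.Prime)
    (hs : s ≠ 0) (hk : k ≠ 0) (hdvd : -((s : ℤ) ^ 2 * (P * Q : ℕ)) ∣ (P * Q : ℕ) ^ k)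
    (hθ : (θ - σ θ) ^ 2 = (-((s : ℤ) ^ 2 * (P * Q : ℕ)) : ℤ))
    (hne : ∀ x y z : ℚ, x ≠ 0 → x ^ 2 ≠ P * y ^ 2 + Q * z ^ 2) (hc : c ^ 4 = 1) :
    c ^ 2 = 1 := by
  have hP0 : (P : ℚ) ≠ 0 := Nat.cast_ne_zero.mpr hP.ne_zero
  have hQ0 : (Q : ℚ) ≠ 0 := Nat.cast_ne_zero.mpr hQ.ne_zero
  have hΔ : -((s : ℤ) ^ 2 * (P * Q : ℕ)) < 0 := by
    have := hP.pos
    have := hQ.pos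
    have := Nat.pos_of_ne_zero hs
    rw [neg_lt_zero]
    positivity
  obtain ⟨ω, hω⟩ := exists_sq_eq_neg hs hθ
  refine hσ.sq_eq_one_of_pow_four_eq_one hθ hfr hΔ (fun n hn ⟨x, y, a, ha, hxy⟩ => ?_) hc
  obtain ⟨h, f, hh, hnf, hf⟩ := exists_natAbs_eq_sq_mul hΔ.ne hn hdvd hk
  have hha : (h * a : ℚ) ≠ 0 := mul_ne_zero (Nat.cast_ne_zero.mpr hh) ha
  rw [hnf] at hxy
  push_cast at hxy
  obtain ⟨f₁, f₂, h₁, h₂, rfl⟩ := Nat.dvd_mul.mp hf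
  rcases (Nat.dvd_prime hP).mp h₁ with rfl | rfl <;> rcases (Nat.dvd_prime hQ).mp h₂ with rfl | rfl
  · exact exists_associated_sq_of_natAbs_eq (τ := 1) (by simp) hnf
  · refine absurd ?_ (hne (h * a) (s * y) (x / f₂) hha)
    push_cast at hxy
    field_simp
    linear_combination -hxy
  · refine absurd ?_ (hne (h * a) (x / f₁) (s * y) hha)
    push_cast at hxy
    field_simp
    linear_combination -hxy
  · exact exists_associated_sq_of_natAbs_eq (associated_sq_natCast_of_sq_eq_neg hω) hnf

theorem sq_eq_one_of_pow_four_eq_one_of_neg_four_mul {p : ℕ} (hp : p.Prime) (hp4 : p % 4 = 1)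
    (hp8 : p % 8 ≠ 1) (hθ : (θ - σ θ) ^ 2 = (-4 * p : ℤ)) (hc : c ^ 4 = 1) : c ^ 2 = 1 := by
  have hp0 : (p : ℚ) ≠ 0 := Nat.cast_ne_zero.mpr hp.ne_zero
  have hΔ : (-4 * p : ℤ) < 0 := by
    have := hp.pos
    omega
  obtain ⟨ω, hω⟩ := exists_sq_eq_neg (N := p) (s := 2) two_ne_zero
    (by rw [hθ]; push_cast; ring)
  refine hσ.sq_eq_one_of_pow_four_eq_one hθ hfr hΔ (fun n hn ⟨x, y, a, ha, hxy⟩ => ?_) hc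
  obtain ⟨h, f, hh, hnf, hf⟩ := exists_natAbs_eq_sq_mul (M := 2 * p) (k := 2) hΔ.ne hn
    ⟨-p, by push_cast; ring⟩ two_ne_zero
  have hha : (h * a : ℚ) ≠ 0 := mul_ne_zero (Nat.cast_ne_zero.mpr hh) ha
  rw [hnf] at hxy
  obtain ⟨f₁, f₂, h₁, h₂, rfl⟩ := Nat.dvd_mul.mp hf
  push_cast at hxy
  rcases (Nat.dvd_prime Nat.prime_two).mp h₁ with rfl | rfl <;>
    rcases (Nat.dvd_prime hp).mp h₂ with rfl | rfl
  · exact exists_associated_sq_of_natAbs_eq (τ := 1) (by simp) hnf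
  · exact exists_associated_sq_of_natAbs_eq (associated_sq_natCast_of_sq_eq_neg hω)
      (by rwa [one_mul] at hnf)
  · refine absurd (emod_eight_eq_one_of_sq_add_mul_sq hp hp4 (x := x) (y := 2 * y) hha ?_) hp8
    push_cast at hxy
    linear_combination hxy
  · refine absurd (emod_eight_eq_one_of_sq_add_mul_sq hp hp4 (x := 2 * y) (y := x / f₂) hha ?_) hp8
    push_cast at hxy
    field_simp
    linear_combination hxy

end IsQuadraticConj

end PrimeDiscriminantPairs

section FourTorsion

theorem exists_eq_sq_add_sq_of_prime {p : ℕ} (hp : p.Prime) (hp4 : p % 4 ≠ 3) :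
    ∃ r t : ℚ, t ≠ 0 ∧ (p : ℚ) = r ^ 2 + t ^ 2 := by
  have := Fact.mk hp
  obtain ⟨r, t, hrt⟩ := Nat.Prime.sq_add_sq hp4
  refine ⟨r, t, ?_, mod_cast hrt.symm⟩
  rintro ht
  rw [Nat.cast_eq_zero.mp ht] at hrt
  exact hp.prime.not_isSquare ⟨r, by rw [← hrt]; ring⟩

variable {K : Type*} [Field K] [NumberField K] [IsTotallyComplex K]
  (hodd : Odd (classNumber K)) {g : Gal(K/ℚ)} (hg : g * g = 1)
include hodd hg

theorem NegatesSqrt.sq_ne_prime_mul_sq_add_prime_mul_sq {P Q : ℕ} (hP : P.Prime) (hQ : Q.Prime)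
    (hPQ : P ≠ Q) (hnP : NegatesSqrt g P) (hnQ : NegatesSqrt g (-Q)) (hP4 : P % 4 = 1 ∨ P = 2)
    (hQ4 : Q % 4 = 3 ∨ Q = 2) {x y z : ℚ} (hx : x ≠ 0) : x ^ 2 ≠ P * y ^ 2 + Q * z ^ 2 := by
  intro h
  obtain ⟨r, t, ht, hrt⟩ := exists_eq_sq_add_sq_of_prime hP (by omega)
  obtain ⟨X, Y, Z, hE, h0⟩ := exists_sq_eq_neg_mul_sq_add_mul_sq ht hrt hx h
  refine hnQ.sq_ne_mul_sq_add_mul_sq hodd hg hnP (Nat.prime_iff_prime_int.mp hQ).neg.squarefree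
    (Nat.prime_iff_prime_int.mp hP).squarefree
    (Nat.isCoprime_iff_coprime.mpr ((Nat.coprime_primes hQ hP).mpr hPQ.symm)).neg_left
    (by omega) (by omega) h0 ?_
  push_cast
  exact hE

variable {R : Type*} [CommRing R] [IsDedekindDomain R] [CharZero R] [Module.Free ℤ R]
  [Module.Finite ℤ R] {σ : R ≃+* R} (hσ : IsQuadraticConj ℤ σ) {θ : R}
  (hfr : Module.finrank ℤ R = 2) {c : ClassGroup R} {m n : ℤ} (hm : Pstar m) (hn : Pstar n)
  (hnm : NegatesSqrt g m) (hnn : NegatesSqrt g n) (hθ : (θ - σ θ) ^ 2 = (m * n : ℤ))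
include hσ hfr hn hnm hnn hθ

namespace IsQuadraticConj

theorem sq_eq_one_of_pow_four_eq_one_of_eq_neg_four (hm4 : m = -4) (hpos : 0 < n) (hn8 : n ≠ 8)
    (hc : c ^ 4 = 1) : c ^ 2 = 1 := by
  obtain ⟨p, hp, hp4, rfl⟩ := (hn.eq_eight_or_eq_prime_of_pos hpos).resolve_left hn8
  rw [hm4] at hnm hθ
  have hneg_one : NegatesSqrt g (-1) := .of_sq_mul two_ne_zero (by simpa using hnm)
  exact hσ.sq_eq_one_of_pow_four_eq_one_of_neg_four_mul hfr hp hp4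
    (hneg_one.emod_eight_ne_one hodd hg hp hnn) hθ hc

include hm

theorem sq_eq_one_of_pow_four_eq_one_of_pstar_mul_pstar (hneg : m < 0) (hpos : 0 < n)
    (hmn : m = -4 ∨ m = -8 → n ≠ 8) (hc : c ^ 4 = 1) : c ^ 2 = 1 := by
  by_cases hm4 : m = -4
  · exact hσ.sq_eq_one_of_pow_four_eq_one_of_eq_neg_four hodd hg hfr hn hnm hnn hθ hm4 hpos
      (hmn (.inl hm4)) hc
  obtain ⟨s, Q, hs, hQ, hmQ, hmdvd, hQ4⟩ := hm.exists_eq_neg_sq_mul hneg hm4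
  obtain ⟨t, P, ht, hP, hnP, hndvd, hP4⟩ := hn.exists_eq_sq_mul hpos
  have hPQ : P ≠ Q := by omega
  have hmul : m * n = -(((t * s : ℕ) : ℤ) ^ 2 * (P * Q : ℕ)) := by
    rw [hmQ, hnP]
    push_cast
    ring
  have hdvd : m * n ∣ (P * Q : ℕ) ^ 3 := by
    rw [Nat.cast_mul, mul_pow, mul_comm m]
    exact mul_dvd_mul hndvd hmdvd
  rw [hmQ, ← mul_neg] at hnm
  rw [hnP] at hnn
  refine hσ.sq_eq_one_of_pow_four_eq_one_of_forall_ne hfr hP hQ (mul_ne_zero ht hs) three_ne_zero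
    (hmul ▸ hdvd) (hmul ▸ hθ) (fun _ _ _ hx => ?_) hc
  exact NegatesSqrt.sq_ne_prime_mul_sq_add_prime_mul_sq hodd hg hP hQ hPQ
    (hnn.of_sq_mul (mod_cast ht)) (hnm.of_sq_mul (mod_cast hs)) (by omega) (by omega) hx

end IsQuadraticConj

end FourTorsion

section ClassGroupExponents

theorem exponent_classGroup_dvd_exponent_mul_finrank (k K : Type*) [Field k] [NumberField k]
    [Field K] [NumberField K] [Algebra k K] :
    Monoid.exponent (ClassGroup (𝓞 k)) ∣
      Monoid.exponent (ClassGroup (𝓞 K)) * Module.finrank k K := by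
  refine Monoid.exponent_dvd_of_forall_pow_eq_one fun c => ?_
  obtain ⟨I, hI0, hI⟩ := exists_pow_eq_one_iff_isPrincipal c
  have hJ0 : I.map (algebraMap (𝓞 k) (𝓞 K)) ≠ 0 :=
    (Ideal.map_eq_bot_iff_of_injective (FaithfulSMul.algebraMap_injective _ _)).not.mpr hI0
  have hJ := Monoid.pow_exponent_eq_one
    (ClassGroup.mk0 ⟨_, mem_nonZeroDivisors_iff_ne_zero.mpr hJ0⟩)
  rw [← map_pow, ClassGroup.mk0_eq_one_iff] at hJ
  obtain ⟨a, ha⟩ := hJ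
  have hnorm : (I ^ Module.finrank (𝓞 k) (𝓞 K)) ^ Monoid.exponent (ClassGroup (𝓞 K)) =
      Ideal.span {Algebra.intNorm (𝓞 k) (𝓞 K) a} := by
    rw [← Ideal.relNorm_algebraMap (𝓞 K) I, ← map_pow, ← Ideal.relNorm_singleton]
    exact congrArg _ ha
  refine (hI _).mpr ⟨Algebra.intNorm (𝓞 k) (𝓞 K) a, ?_⟩
  rw [IsFractionRing.finrank_eq (𝓞 k) k (𝓞 K) K, mul_comm, pow_mul]
  exact hnorm

theorem exponent_classGroup_dvd_exponent_mul_of_finrank_eq (k : Type*) {K : Type*} [Field k]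
    [NumberField k] [Field K] [NumberField K] [Algebra k K] {d : ℕ} (hK : Module.finrank ℚ K = d) :
    Monoid.exponent (ClassGroup (𝓞 k)) ∣ Monoid.exponent (ClassGroup (𝓞 K)) * d :=
  (exponent_classGroup_dvd_exponent_mul_finrank k K).trans <|
    mul_dvd_mul_left _ (hK ▸ Module.finrank_mul_finrank ℚ k K ▸ dvd_mul_left _ _)

theorem odd_natCard_of_odd_exponent {G : Type*} [Group G] [Finite G]
    (h : Odd (Monoid.exponent G)) : Odd (Nat.card G) := by
  by_contra hcard
  have := Fact.mk Nat.prime_two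
  obtain ⟨g, hg⟩ := exists_prime_orderOf_dvd_card' 2 (Nat.not_odd_iff_even.mp hcard).two_dvd
  exact Nat.not_even_iff_odd.mpr h
    (even_iff_two_dvd.mpr (hg ▸ Monoid.order_dvd_exponent g))

theorem exponent_dvd_mul_of_dvd_mul_pow {G : Type*} [Monoid G] {a n p k : ℕ}
    (hG : Monoid.exponent G ∣ n * p ^ k) (h : ∀ c : G, c ^ (a * p) = 1 → c ^ a = 1) :
    Monoid.exponent G ∣ a * n := by
  have hdescent (k : ℕ) (c : G) (hc : c ^ (a * p ^ k) = 1) : c ^ a = 1 := by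
    induction k with
    | zero => simpa using hc
    | succ k ih =>
      refine ih ?_
      rw [mul_comm, pow_mul]
      refine h _ ?_
      rwa [← pow_mul, mul_left_comm, ← pow_succ]
  refine Monoid.exponent_dvd_of_forall_pow_eq_one fun c => ?_
  rw [mul_comm, pow_mul]
  refine hdescent k _ ?_
  rw [← pow_mul, mul_left_comm]
  exact Monoid.exponent_dvd_iff_forall_pow_eq_one.mp (hG.mul_left a) c

end ClassGroupExponents

section QuadraticSubfields

theorem exists_isQuadraticConj (k F : Type*) [Field k] [Field F] [Algebra k F]
    [Algebra.IsQuadraticExtension k F] [Algebra.IsSeparable k F] :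
    ∃ σ : Gal(F/k), IsQuadraticConj k (σ : F ≃+* F) := by
  have hcard : Nat.card Gal(F/k) = 2 := by
    rw [IsGalois.card_aut_eq_finrank, Algebra.IsQuadraticExtension.finrank_eq_two]
  obtain ⟨σ, -, huniq⟩ := (Nat.card_eq_two_iff' 1).mp hcard
  have hσσ : σ * σ = 1 := by rw [← pow_two, ← hcard, pow_card_eq_one']
  refine ⟨σ, fun x => DFunLike.congr_fun hσσ x, fun x => ⟨fun hx => ?_, ?_⟩⟩
  · refine (IsGalois.mem_range_algebraMap_iff_fixed x).mpr fun g => ?_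
    rcases eq_or_ne g 1 with rfl | hg
    · rfl
    · exact huniq g hg ▸ hx
  · rintro ⟨r, rfl⟩
    exact σ.commutes r

variable {F : Type*} [Field F] [NumberField F] [Algebra.IsQuadraticExtension ℚ F]

theorem exists_isQuadraticConj_sub_sq_eq {x : F} {d : ℤ} (hx : x ^ 2 = d) (hneg : d < 0)
    (hd : d % 4 = 0 ∨ d % 4 = 1) :
    ∃ (σ : 𝓞 F ≃+* 𝓞 F) (θ : 𝓞 F), IsQuadraticConj ℤ σ ∧ (θ - σ θ) ^ 2 = d := by
  obtain ⟨σ, hσ⟩ := exists_isQuadraticConj ℚ F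
  have hσx : σ x ≠ x := by
    intro h
    obtain ⟨r, rfl⟩ := (hσ.apply_eq_self_iff x).mp h
    have hr : r ^ 2 = d := (algebraMap ℚ F).injective (by simpa using hx)
    have : (d : ℚ) < 0 := mod_cast hneg
    nlinarith
  obtain ⟨θ, hθ⟩ := exists_sub_smul_sq_eq hd hx
  exact ⟨_, θ, hσ.mapRingEquiv ℤ, (hθ σ).2 ((apply_sqrt_eq_or_eq_neg hx σ).resolve_left hσx)⟩

variable {K : Type*} [Field K] [NumberField K] [Algebra F K] {k : ℕ}
  (hK : Module.finrank ℚ K = 2 ^ k)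
include hK

theorem exponent_classGroup_dvd_of_pstar {m : ℤ} (hm : Pstar m) (hneg : m < 0) {x : F}
    (hx : x ^ 2 = m) :
    Monoid.exponent (ClassGroup (𝓞 F)) ∣ Monoid.exponent (ClassGroup (𝓞 K)) := by
  obtain ⟨σ, θ, hσ, hθ⟩ := exists_isQuadraticConj_sub_sq_eq hx hneg hm.emod_four
  have hfr : Module.finrank ℤ (𝓞 F) = 2 := by
    rw [RingOfIntegers.rank, Algebra.IsQuadraticExtension.finrank_eq_two]
  rw [← one_mul (Monoid.exponent (ClassGroup (𝓞 K)))]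
  refine exponent_dvd_mul_of_dvd_mul_pow (exponent_classGroup_dvd_exponent_mul_of_finrank_eq F hK)
    fun c hc => ?_
  rw [pow_one]
  exact hσ.eq_one_of_sq_eq_one_of_pstar hfr hm hneg hθ hc

theorem exponent_classGroup_dvd_two_mul_of_pstar_mul_pstar [IsTotallyComplex K]
    (hodd : Odd (classNumber K)) {g : Gal(K/ℚ)} (hg : g * g = 1) {m n : ℤ} (hm : Pstar m)
    (hn : Pstar n) (hneg : m < 0) (hpos : 0 < n) (hmn : m = -4 ∨ m = -8 → n ≠ 8)
    (hgm : NegatesSqrt g m) (hgn : NegatesSqrt g n) {x : F} (hx : x ^ 2 = (m * n : ℤ)) :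
    Monoid.exponent (ClassGroup (𝓞 F)) ∣ 2 * Monoid.exponent (ClassGroup (𝓞 K)) := by
  have hmod : m * n % 4 = 0 ∨ m * n % 4 = 1 := by
    rw [Int.mul_emod]
    rcases hm.emod_four with h | h <;> rcases hn.emod_four with h' | h' <;> simp [h, h']
  obtain ⟨σ, θ, hσ, hθ⟩ :=
    exists_isQuadraticConj_sub_sq_eq hx (mul_neg_of_neg_of_pos hneg hpos) hmod
  have hfr : Module.finrank ℤ (𝓞 F) = 2 := by
    rw [RingOfIntegers.rank, Algebra.IsQuadraticExtension.finrank_eq_two]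
  exact exponent_dvd_mul_of_dvd_mul_pow (exponent_classGroup_dvd_exponent_mul_of_finrank_eq F hK)
    fun c hc => hσ.sq_eq_one_of_pow_four_eq_one_of_pstar_mul_pstar hodd hg hfr hm hn hgm hgn hθ
      hneg hpos hmn hc

end QuadraticSubfields

section SubfieldsOfComplex

theorem cpow_half_sq (m : ℤ) : ((m : ℂ) ^ ((1 : ℂ) / 2)) ^ 2 = m := by
  simp

theorem Qsqrt_le_iff {m : ℤ} {t : ℂ} (ht : t ^ 2 = m) {K : IntermediateField ℚ ℂ} :
    Qsqrt m ≤ K ↔ t ∈ K := by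
  rw [Qsqrt, IntermediateField.adjoin_simple_le_iff]
  rcases sq_eq_sq_iff_eq_or_eq_neg.mp (ht.trans (cpow_half_sq m).symm) with rfl | rfl
  · rfl
  · exact neg_mem_iff.symm

theorem isQuadraticExtension_Qsqrt {m : ℤ} (hm : m < 0) :
    Algebra.IsQuadraticExtension ℚ (Qsqrt m) where
  finrank_eq_two' := by
    have hirr : Irreducible (Polynomial.X ^ 2 - Polynomial.C (m : ℚ)) := by
      refine X_pow_sub_C_irreducible_of_prime Nat.prime_two fun b hb => ?_
      have : (m : ℚ) < 0 := mod_cast hm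
      nlinarith
    have hroot : Polynomial.aeval ((m : ℂ) ^ ((1 : ℂ) / 2))
        (Polynomial.X ^ 2 - Polynomial.C (m : ℚ)) = 0 := by
      simp
    have hmonic := Polynomial.monic_X_pow_sub_C (m : ℚ) two_ne_zero
    rw [Qsqrt, IntermediateField.adjoin.finrank ⟨_, hmonic, hroot⟩,
      ← minpoly.eq_of_irreducible_of_monic hirr hroot hmonic, Polynomial.natDegree_X_pow_sub_C]

theorem IsImaginary.isTotallyComplex {K : IntermediateField ℚ ℂ} [IsGalois ℚ K]
    (him : IsImaginary K) : IsTotallyComplex K where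
  isComplex v := by
    have hval : (InfinitePlace.mk (algebraMap K ℂ)).IsComplex := by
      obtain ⟨x, hx⟩ := him
      rw [InfinitePlace.isComplex_mk_iff]
      exact fun hreal => hx (Complex.conj_eq_iff_im.mp (RingHom.congr_fun hreal x))
    obtain ⟨g, rfl⟩ := InfinitePlace.exists_smul_eq_of_comap_eq (k := ℚ)
      (w := InfinitePlace.mk (algebraMap K ℂ)) (w' := v) (Subsingleton.elim _ _)
    exact InfinitePlace.isComplex_smul_iff.mpr hval

variable {K : IntermediateField ℚ ℂ} [NumberField K] {k : ℕ} (hK : Module.finrank ℚ K = 2 ^ k)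

section ExponentDivisibility

include hK

theorem Efield_Qsqrt_dvd {m : ℤ} (hm : Pstar m) (hneg : m < 0) {x : K} (hx : x ^ 2 = m) :
    Efield (Qsqrt m) ∣ Efield K := by
  have hx' : (x : ℂ) ^ 2 = m := mod_cast congrArg Subtype.val hx
  let : Algebra (Qsqrt m) K :=
    (IntermediateField.inclusion ((Qsqrt_le_iff hx').mpr x.2)).toRingHom.toAlgebra
  have := isQuadraticExtension_Qsqrt hneg
  have : NumberField (Qsqrt m) := .of_module_finite ℚ _
  exact exponent_classGroup_dvd_of_pstar hK hm hneg
    (x := ⟨x, (Qsqrt_le_iff hx').mp le_rfl⟩) (Subtype.ext (by simpa using hx'))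

theorem Efield_Qsqrt_mul_dvd [IsTotallyComplex K]
    (hodd : Odd (classNumber K)) {g : Gal(K/ℚ)} (hg : g * g = 1) {m n : ℤ} (hm : Pstar m)
    (hn : Pstar n) (hneg : m < 0) (hpos : 0 < n) (hmn : m = -4 ∨ m = -8 → n ≠ 8)
    (hgm : NegatesSqrt g m) (hgn : NegatesSqrt g n) :
    Efield (Qsqrt (m * n)) ∣ 2 * Efield K := by
  obtain ⟨x, hx, -⟩ := id hgm
  obtain ⟨y, hy, -⟩ := id hgn
  have hxy : ((x * y : K) : ℂ) ^ 2 = (m * n : ℤ) :=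
    mod_cast congrArg Subtype.val (show (x * y) ^ 2 = (m * n : K) by rw [mul_pow, hx, hy])
  let : Algebra (Qsqrt (m * n)) K :=
    (IntermediateField.inclusion ((Qsqrt_le_iff hxy).mpr (x * y).2)).toRingHom.toAlgebra
  have := isQuadraticExtension_Qsqrt (mul_neg_of_neg_of_pos hneg hpos)
  have : NumberField (Qsqrt (m * n)) := .of_module_finite ℚ _
  exact exponent_classGroup_dvd_two_mul_of_pstar_mul_pstar hK hodd hg hm hn hneg hpos hmn hgm hgn
    (x := ⟨(x * y : K), (Qsqrt_le_iff hxy).mp le_rfl⟩) (Subtype.ext (by simpa using hxy))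

end ExponentDivisibility

theorem IsSqrtBasis.eq_iSup_Qsqrt [IsGalois ℚ K] {ι : Type*} [Fintype ι] {x : ι → K} {m : ι → ℤ}
    (hx : IsSqrtBasis x m) : K = ⨆ i, Qsqrt (m i) := by
  have hsq (i : ι) : (x i : ℂ) ^ 2 = m i := mod_cast congrArg Subtype.val (hx.sq i)
  refine le_antisymm ?_ (iSup_le fun i => (Qsqrt_le_iff (hsq i)).mpr (x i).2)
  let F : IntermediateField ℚ K := (⨆ i, Qsqrt (m i)).comap (algebraMap K ℂ).toRatAlgHom
  have hmem (i : ι) : x i ∈ F :=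
    (Qsqrt_le_iff (hsq i)).mp (le_iSup (fun i => Qsqrt (m i)) i)
  have hfix : F.fixingSubgroup = ⊥ :=
    (Subgroup.eq_bot_iff_forall _).mpr fun g hg => hx.eq_one_of_fixes g fun i =>
      (IntermediateField.mem_fixingSubgroup_iff _ _).mp hg _ (hmem i)
  have htop : F = ⊤ := by
    rw [← IsGalois.fixedField_fixingSubgroup F, hfix, IntermediateField.fixedField_bot]
  exact fun t ht => (htop ▸ IntermediateField.mem_top : (⟨t, ht⟩ : K) ∈ F)

end SubfieldsOfComplex

section ComplexConjugation

variable {K : Type*} [Field K] [NumberField K] [IsTotallyComplex K]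

theorem exists_forall_isConj [IsGalois ℚ K] (h2 : ∀ g : Gal(K/ℚ), g * g = 1) :
    ∃ c : Gal(K/ℚ), ∀ φ : K →+* ℂ, ComplexEmbedding.IsConj φ c := by
  obtain ⟨φ⟩ : Nonempty (K →+* ℂ) := inferInstance
  obtain ⟨c, hc⟩ : ∃ c : Gal(K/ℚ), ComplexEmbedding.IsConj φ c :=
    InfinitePlace.exists_isConj_of_isRamified <| InfinitePlace.isRamified_iff.mpr
      ⟨IsTotallyComplex.isComplex _, IsTotallyReal.isReal _⟩
  refine ⟨c, fun ψ => ?_⟩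
  obtain ⟨ν, rfl⟩ := InfinitePlace.ComplexEmbedding.exists_comp_symm_eq_of_comp_eq (k := ℚ) φ ψ
    (Subsingleton.elim _ _)
  have hconj : ν.symm⁻¹ * c * ν.symm = c := by
    rw [mul_assoc, mul_comm_of_forall_mul_self_eq_one h2 c, inv_mul_cancel_left]
  exact hconj ▸ hc.comp ν.symm

variable {ι : Type*} [Fintype ι] {x : ι → K} {m : ι → ℤ}

theorem IsSqrtBasis.exists_neg (hx : IsSqrtBasis x m) (hm : ∀ i, m i ≠ 0) {c : Gal(K/ℚ)}
    (hc : ∀ φ : K →+* ℂ, ComplexEmbedding.IsConj φ c) : ∃ i, m i < 0 := by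
  by_contra! h
  obtain ⟨φ⟩ : Nonempty (K →+* ℂ) := inferInstance
  refine (ComplexEmbedding.isConj_ne_one_iff (hc φ)).mpr
    (IsTotallyComplex.complexEmbedding_not_isReal φ) ?_
  exact hx.eq_one_of_fixes c fun i =>
    apply_sqrt_eq_self_of_pos hc (hx.sq i) ((h i).lt_of_ne (hm i).symm)

end ComplexConjugation

section Multiquadratic

namespace IsNQuadratic

variable {n : ℕ} {K : IntermediateField ℚ ℂ} (hK : IsNQuadratic n K)
include hK

theorem mul_self_eq_one (g : Gal(K/ℚ)) : g * g = 1 := by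
  obtain ⟨-, -, ⟨e⟩⟩ := hK
  have hsq : ∀ z : Multiplicative (ZMod 2), z * z = 1 := by decide
  exact e.injective (funext fun i => by rw [map_mul, map_one, Pi.mul_apply, hsq, Pi.one_apply])

theorem natCard_gal : Nat.card Gal(K/ℚ) = 2 ^ n := by
  obtain ⟨-, -, ⟨e⟩⟩ := hK
  rw [Nat.card_congr e.toEquiv, Nat.card_fun, Nat.card_fin]
  simp

end IsNQuadratic

end Multiquadratic

section TwoNegativeGenerators

theorem IsSqrtBasis.comp_equiv {K ι κ : Type*} [Field K] [NumberField K] [Fintype ι] [Fintype κ]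
    {x : ι → K} {m : ι → ℤ} (hx : IsSqrtBasis x m) (e : κ ≃ ι) :
    IsSqrtBasis (x ∘ e) (m ∘ e) where
  sq i := hx.sq (e i)
  card_gal := by rw [hx.card_gal, Fintype.card_congr e]
  eq_one_of_fixes g hg := hx.eq_one_of_fixes g fun i => by simpa using hg (e.symm i)

variable {K : Type*} [Field K] [NumberField K] [IsTotallyComplex K] [IsGalois ℚ K]
  (hodd : Odd (classNumber K)) (h2 : ∀ g : Gal(K/ℚ), g * g = 1)
include hodd h2

theorem IsSqrtBasis.exists_neg_neg {ι : Type*} [Fintype ι] {x : ι → K} {m : ι → ℤ}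
    (hx : IsSqrtBasis x m) (hm : ∀ i, Pstar (m i))
    (hm8 : ∀ i j, m i = -4 ∨ m i = -8 → m j ≠ 8) (hι : 2 < Fintype.card ι) :
    ∃ i j, i ≠ j ∧ m i < 0 ∧ m j < 0 := by
  classical
  obtain ⟨c, hc⟩ := exists_forall_isConj h2
  obtain ⟨i, hi⟩ := hx.exists_neg (fun i => (hm i).ne_zero) hc
  obtain ⟨j, hj, k, hk, hjk⟩ : ∃ j ∈ Finset.univ.erase i, ∃ k ∈ Finset.univ.erase i, j ≠ k := by
    rw [← Finset.one_lt_card, Finset.card_erase_of_mem (Finset.mem_univ i), Finset.card_univ]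
    lia
  obtain ⟨l, hl, hlneg⟩ := hx.exists_ne_neg hm hm8 hodd h2 hc hi (Finset.ne_of_mem_erase hj)
    (Finset.ne_of_mem_erase hk) hjk
  exact ⟨i, l, hl.symm, hi, hlneg⟩

theorem exists_isSqrtBasis_pstar_neg_neg {n : ℕ} (hcard : Nat.card Gal(K/ℚ) = 2 ^ (n + 3)) :
    ∃ (x : Fin (n + 3) → K) (m : Fin (n + 3) → ℤ), IsSqrtBasis x m ∧ (∀ i, Pstar (m i)) ∧
      (∀ i j, m i = -4 ∨ m i = -8 → m j ≠ 8) ∧ m 0 < 0 ∧ m 1 < 0 := by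
  obtain ⟨x, m, hx, hm⟩ := exists_isSqrtBasis_pstar hodd h2 hcard
  obtain ⟨y, d, hy, hd, hd8⟩ := hx.exists_pstar_forall_ne_eight hm
  obtain ⟨i, j, hij, hi, hj⟩ := hy.exists_neg_neg hodd h2 hd hd8 (by simp)
  obtain ⟨e, rfl, rfl⟩ : ∃ e : Equiv.Perm (Fin (n + 3)), e 0 = i ∧ e 1 = j :=
    MulAction.is_two_pretransitive_iff.mp (Equiv.Perm.isMultiplyPretransitive _ 2)
      Fin.zero_ne_one hij
  exact ⟨_, _, hy.comp_equiv e, fun i => hd (e i), fun i j => hd8 (e i) (e j), hi, hj⟩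

end TwoNegativeGenerators

theorem stmt8_general {n u : ℕ} (hu : Odd u) {K : IntermediateField ℚ ℂ}
    (hK : IsNQuadratic (n + 3) K) (him : IsImaginary K) (hE : Efield K ∣ u) :
    ∃ m : Fin (n + 3) → ℤ, (∀ i, Pstar (m i)) ∧ m 0 < 0 ∧ m 1 < 0 ∧ K = ⨆ i, Qsqrt (m i) ∧
      (∀ i, m i < 0 → Efield (Qsqrt (m i)) ∣ u) ∧
      ∀ i j, m i < 0 → 0 < m j → Efield (Qsqrt (m i * m j)) ∣ 2 * u := by
  obtain ⟨_, _, -⟩ := id hK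
  have : NumberField K := .of_module_finite ℚ K
  have := him.isTotallyComplex
  have hodd : Odd (classNumber K) := by
    rw [classNumber, ← Nat.card_eq_fintype_card]
    exact odd_natCard_of_odd_exponent (hu.of_dvd_nat hE)
  have hdeg : Module.finrank ℚ K = 2 ^ (n + 3) := by
    rw [← IsGalois.card_aut_eq_finrank, hK.natCard_gal]
  obtain ⟨x, m, hx, hm, hm8, h0, h1⟩ :=
    exists_isSqrtBasis_pstar_neg_neg hodd hK.mul_self_eq_one hK.natCard_gal
  obtain ⟨g, hg, -⟩ := hx.exists_apply_eq_neg Set.univ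
  have hgm (i : Fin (n + 3)) : NegatesSqrt g (m i) := hx.negatesSqrt_of_apply_eq_neg (hg i trivial)
  refine ⟨m, hm, h0, h1, hx.eq_iSup_Qsqrt, fun i hi => ?_, fun i j hi hj => ?_⟩
  · exact (Efield_Qsqrt_dvd hdeg (hm i) hi (hx.sq i)).trans hE
  · exact (Efield_Qsqrt_mul_dvd hdeg hodd (hK.mul_self_eq_one g) (hm i) (hm j) hi hj (hm8 i j)
      (hgm i) (hgm j)).trans (mul_dvd_mul_left 2 hE)

/-- Theorem on the shape of imaginary triquadratic fields whose class group has
exponent dividing an odd number `u`. -/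
theorem stmt8 (u : ℕ) (hu : Odd u) (hupos : 0 < u)
    (K : IntermediateField ℚ ℂ)
    (hK : IsNQuadratic 3 K) (him : IsImaginary K)
    (hE : Efield K ∣ u) :
    ∃ p₁ p₂ p₃ : ℤ, Pstar p₁ ∧ p₁ < 0 ∧ Pstar p₂ ∧ p₂ < 0 ∧ Pstar p₃ ∧
      K = Qsqrt p₁ ⊔ Qsqrt p₂ ⊔ Qsqrt p₃ ∧
      Efield (Qsqrt p₁) ∣ u ∧ Efield (Qsqrt p₂) ∣ u ∧
      (p₃ < 0 → Efield (Qsqrt p₃) ∣ u) ∧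
      (0 < p₃ → Efield (Qsqrt (p₁ * p₃)) ∣ 2 * u ∧ Efield (Qsqrt (p₂ * p₃)) ∣ 2 * u) := by
  obtain ⟨m, hm, h0, h1, hsup, hdvd, hmul⟩ := stmt8_general (n := 0) hu hK him hE
  exact ⟨m 0, m 1, m 2, hm 0, h0, hm 1, h1, hm 2, hsup.trans iSup_fin_three, hdvd 0 h0, hdvd 1 h1,
    hdvd 2, fun hpos => ⟨hmul 0 2 h0 hpos, hmul 1 2 h1 hpos⟩⟩
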